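/- Let Ω = {0,1,2,3}^ℕ carry the product of the uniform probability measures on {0,1,2,3}, and define U_B : Ω × Ω → {0,1} by U_B(x,y) = 1 if x ≠ y and x_k − y_k ≡ ±1 (mod 4), where k is the smallest index with x_k ≠ y_k, and U_B(x,y) = 0 otherwise (U_B is the infinite lexicographic power of the 4-cycle C₄). Then U_B is finitely forcible: there exist finitely many finite simple graphs F₁,…,F_m such that every graphon W ∈ 𝒲₀ with t(F_i,W) = t(F_i,U_B) for i = 1,…,m satisfies t(F,W) = t(F,U_B) for every finite simple graph F, where t(F,U_B) = ∫_{Ω^{V(F)}} ∏_{ij∈E(F)} U_B(x_i,x_j) ∏_{i∈V(F)} dx_i with respect to the product measure on Ω^{V(F)}. -/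

import Mathlib

open MeasureTheory
open scoped Classical

noncomputable section

/-- The unit interval `[0,1]` as a subset of `ℝ`. -/
def I01 : Set ℝ := Set.Icc 0 1

/-- The cube `[0,1]^n`. -/
def cube (n : ℕ) : Set (Fin n → ℝ) := Set.univ.pi fun _ => I01

/-- `W` belongs to `𝒲`: a bounded symmetric measurable function on `[0,1]²`. -/
def memW (W : ℝ → ℝ → ℝ) : Prop :=
  Measurable (Function.uncurry W) ∧
  (∀ x ∈ I01, ∀ y ∈ I01, W x y = W y x) ∧
  ∃ C : ℝ, ∀ x ∈ I01, ∀ y ∈ I01, |W x y| ≤ C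

/-- `W` belongs to `𝒲₀`: a graphon, i.e. symmetric measurable with values in `[0,1]`. -/
def memW0 (W : ℝ → ℝ → ℝ) : Prop :=
  Measurable (Function.uncurry W) ∧
  (∀ x ∈ I01, ∀ y ∈ I01, W x y = W y x) ∧
  ∀ x ∈ I01, ∀ y ∈ I01, W x y ∈ Set.Icc (0 : ℝ) 1

/-- Homomorphism density `t(F,W)` of a finite simple graph `F` in `W`. -/
def homDensity {n : ℕ} (F : SimpleGraph (Fin n)) (W : ℝ → ℝ → ℝ) : ℝ :=
  ∫ x in cube n,
    ∏ p ∈ Finset.univ.filter (fun p : Fin n × Fin n => p.1 < p.2 ∧ F.Adj p.1 p.2),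
      W (x p.1) (x p.2)

/-- Two kernels are weakly isomorphic if all their homomorphism densities agree. -/
def WeaklyIsomorphic (U W : ℝ → ℝ → ℝ) : Prop :=
  ∀ (n : ℕ) (F : SimpleGraph (Fin n)), homDensity F U = homDensity F W

/-- `W` is finitely forcible within the class `A`. -/
def FinitelyForcible (A : (ℝ → ℝ → ℝ) → Prop) (W : ℝ → ℝ → ℝ) : Prop :=
  A W ∧ ∃ (k : ℕ) (n : Fin k → ℕ) (F : ∀ i, SimpleGraph (Fin (n i))),
    ∀ U, A U → (∀ i, homDensity (F i) U = homDensity (F i) W) → WeaklyIsomorphic U W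

/-- Density function `t^k(F,W)` of a `k`-labeled graph, as a function of the
labeled variables; the graph has `k` labeled and `m` unlabeled vertices. -/
def labDensity {k m : ℕ} (F : SimpleGraph (Fin (k + m))) (W : ℝ → ℝ → ℝ)
    (x : Fin k → ℝ) : ℝ :=
  ∫ y in cube m,
    ∏ p ∈ Finset.univ.filter
        (fun p : Fin (k + m) × Fin (k + m) => p.1 < p.2 ∧ F.Adj p.1 p.2),
      W (Fin.append x y p.1) (Fin.append x y p.2)

/-- The infinite lexicographic power of the 4-cycle `C₄`, as a 0–1 kernel on
`Ω = {0,1,2,3}^ℕ`: `U_B(x,y) = 1` iff `x ≠ y` and, at the first coordinate `k` where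
they differ, `x_k − y_k ≡ ±1 (mod 4)`. -/
def UB (x y : ℕ → Fin 4) : ℝ :=
  if h : x = y then 0
  else
    if x (Nat.find (Function.ne_iff.mp h)) - y (Nat.find (Function.ne_iff.mp h)) = 1 ∨
       x (Nat.find (Function.ne_iff.mp h)) - y (Nat.find (Function.ne_iff.mp h)) = 3
    then 1 else 0

/-- Homomorphism density `t(F, U_B)` with respect to a measure `μ` on `Ω`,
integrating over `Ω^{V(F)}` with the product measure. -/
def tUB {n : ℕ} (F : SimpleGraph (Fin n)) (μ : Measure (ℕ → Fin 4)) : ℝ :=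
  ∫ x : Fin n → (ℕ → Fin 4),
    ∏ p ∈ Finset.univ.filter (fun p : Fin n × Fin n => p.1 < p.2 ∧ F.Adj p.1 p.2),
      UB (x p.1) (x p.2) ∂(Measure.pi fun _ => μ)

/-!
Reading each coordinate of `Ω` as two binary digits identifies `U_B`, up to null sets, with the
alternating kernel on the branches of the infinite binary tree: two points are adjacent if and only
if the depth at which they separate is even. All densities of an alternating kernel are determined
by the joint distribution of the separation depths of independent random branches, which
ultrametricity and the geometric distribution of the depth determine completely. So it is enough to
force an alternating kernel.

The normalized `L¹` distance of the neighborhoods of two points equals `2⁻ᵈ` if they separate at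
depth `d`, hence the distance in the tree is visible in the kernel. Three kinds of conditions are
imposed on a graphon and, for the last two, on its complement: there is no induced path on four
vertices, the degree is constant, and some moments of the distance have the same values as in the
tree. Each condition says that a nonnegative function vanishes almost everywhere, and its integral
is a linear combination of densities of graphs with at most six vertices.

Conversely, excluding the induced path makes such a graphon `{0,1}`-valued and nests its
neighborhoods. Around a fixed point, the moments then determine the masses of the sets of neighbors
and of non-neighbors within distance `u`, first for `u = 1` and inductively for `u = 1/2, 1/4, …`.
This shows that the distance only takes the values `2⁻ᵈ`, with geometric frequencies, and that
adjacency is the parity of `d`. The triangle inequality and the nesting of the neighborhoods make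
`d` ultrametric.
-/

/-! ### Bounded measurable functions and product measures -/

/-- A measurable function bounded in absolute value; such functions are closed under sums, products
and partial integration, so that Fubini applies to everything built from them. -/
structure BoundedMeasurable {X : Type*} [MeasurableSpace X] (f : X → ℝ) : Prop where
  measurable : Measurable f
  bounded : ∃ C, ∀ x, |f x| ≤ C

namespace BoundedMeasurable

variable {X Y : Type*} [MeasurableSpace X] [MeasurableSpace Y] {f g : X → ℝ}

lemma integrable (hf : BoundedMeasurable f) (μ : Measure X) [IsFiniteMeasure μ] :
    Integrable f μ :=
  hf.bounded.elim fun C hC =>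
    .of_bound hf.measurable.aestronglyMeasurable C (Filter.Eventually.of_forall hC)

lemma comp (hf : BoundedMeasurable f) {e : Y → X} (he : Measurable e) :
    BoundedMeasurable fun y => f (e y) :=
  ⟨hf.measurable.comp he, hf.bounded.imp fun _ hC y => hC (e y)⟩

lemma const (c : ℝ) : BoundedMeasurable fun _ : X => c :=
  ⟨measurable_const, |c|, fun _ => le_rfl⟩

lemma add (hf : BoundedMeasurable f) (hg : BoundedMeasurable g) :
    BoundedMeasurable fun x => f x + g x := by
  obtain ⟨C, hC⟩ := hf.bounded
  obtain ⟨D, hD⟩ := hg.bounded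
  exact ⟨hf.measurable.add hg.measurable, C + D,
    fun x => (abs_add_le _ _).trans (add_le_add (hC x) (hD x))⟩

lemma mul (hf : BoundedMeasurable f) (hg : BoundedMeasurable g) :
    BoundedMeasurable fun x => f x * g x := by
  obtain ⟨C, hC⟩ := hf.bounded
  obtain ⟨D, hD⟩ := hg.bounded
  refine ⟨hf.measurable.mul hg.measurable, C * D, fun x => ?_⟩
  rw [abs_mul]
  exact mul_le_mul (hC x) (hD x) (abs_nonneg _) ((abs_nonneg _).trans (hC x))

lemma sub (hf : BoundedMeasurable f) (hg : BoundedMeasurable g) :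
    BoundedMeasurable fun x => f x - g x := by
  simpa only [sub_eq_add_neg, neg_one_mul] using hf.add ((const (-1)).mul hg)

lemma prod {ι : Type*} (s : Finset ι) {f : ι → X → ℝ} (hf : ∀ i, BoundedMeasurable (f i)) :
    BoundedMeasurable fun x => ∏ i ∈ s, f i x := by
  induction s using Finset.induction_on with
  | empty => simpa only [Finset.prod_empty] using const 1
  | insert a s ha ih => simpa only [Finset.prod_insert ha] using (hf a).mul ih

lemma integral_right {f : X × Y → ℝ} (hf : BoundedMeasurable f) (μ : Measure Y)
    [IsProbabilityMeasure μ] : BoundedMeasurable fun x => ∫ y, f (x, y) ∂μ := by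
  obtain ⟨C, hC⟩ := hf.bounded
  refine ⟨hf.measurable.stronglyMeasurable.integral_prod_right'.measurable, C, fun x => ?_⟩
  exact (norm_integral_le_of_norm_le_const (μ := μ) (f := fun y => f (x, y))
    (.of_forall fun y => hC (x, y))).trans_eq (by rw [probReal_univ, mul_one])

lemma ae_eq_zero_of_integral_eq_zero (hf : BoundedMeasurable f) {μ : Measure X}
    [IsFiniteMeasure μ] (h0 : ∀ x, 0 ≤ f x) (hi : ∫ x, f x ∂μ = 0) : ∀ᵐ x ∂μ, f x = 0 :=
  (integral_eq_zero_iff_of_nonneg h0 (hf.integrable μ)).1 hi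

end BoundedMeasurable

section ProductMeasure

variable {X : Type*} [MeasurableSpace X] {μ : Measure X}

lemma integral_pi_fin_one (f : X → ℝ) :
    ∫ x : Fin 1 → X, f (x 0) ∂(Measure.pi fun _ => μ) = ∫ z, f z ∂μ :=
  (measurePreserving_funUnique μ (Fin 1)).integral_comp' f

variable [IsProbabilityMeasure μ]

lemma measurePreserving_finCons (μ : Measure X) [IsProbabilityMeasure μ] (n : ℕ) :
    MeasurePreserving (fun p : X × (Fin n → X) => (Fin.cons p.1 p.2 : Fin (n + 1) → X))
      (μ.prod (Measure.pi fun _ => μ)) (Measure.pi fun _ => μ) := by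
  convert (measurePreserving_piFinSuccAbove (fun _ : Fin (n + 1) => μ) 0).symm using 1
  funext p i
  refine Fin.cases ?_ (fun j => ?_) i <;> rfl

lemma measurePreserving_finAppend (μ : Measure X) [IsProbabilityMeasure μ] (m n : ℕ) :
    MeasurePreserving (fun p : (Fin m → X) × (Fin n → X) => Fin.append p.1 p.2)
      ((Measure.pi fun _ => μ).prod (Measure.pi fun _ => μ)) (Measure.pi fun _ => μ) := by
  convert (measurePreserving_piCongrLeft (fun _ : Fin (m + n) => μ) finSumFinEquiv).comp
    (measurePreserving_sumPiEquivProdPi_symm fun _ : Fin m ⊕ Fin n => μ) using 1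
  funext p i
  obtain ⟨j, rfl⟩ := finSumFinEquiv.surjective i
  refine Eq.trans ?_ (MeasurableEquiv.piCongrLeft_apply_apply (β := fun _ => X) finSumFinEquiv
    ((MeasurableEquiv.sumPiEquivProdPi fun _ => X).symm p) j).symm
  cases j with
  | inl j => exact Fin.append_left _ _ j
  | inr j => exact Fin.append_right _ _ j

lemma measurePreserving_comp_of_injective {ι κ : Type*} [Fintype ι] [Fintype κ] {e : ι → κ}
    (he : e.Injective) :
    MeasurePreserving (fun (x : κ → X) (i : ι) => x (e i)) (Measure.pi fun _ => μ)
      (Measure.pi fun _ => μ) where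
  measurable := by fun_prop
  map_eq := by
    have hindep := (ProbabilityTheory.iIndepFun_pi (μ := fun _ : κ => μ) (X := fun _ x => x)
      fun _ => aemeasurable_id).precomp he
    rw [(ProbabilityTheory.iIndepFun_iff_map_fun_eq_pi_map fun i =>
      (measurable_pi_apply (e i)).aemeasurable).1 hindep]
    congr 1 with i : 1
    exact (measurePreserving_eval (fun _ : κ => μ) (e i)).map_eq

lemma integral_pi_fin_succ {n : ℕ} {f : (Fin (n + 1) → X) → ℝ} (hf : BoundedMeasurable f) :
    ∫ x, f x ∂(Measure.pi fun _ => μ) =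
      ∫ x, ∫ z, f (Fin.cons z x) ∂μ ∂(Measure.pi fun _ => μ) := by
  have hcons := measurePreserving_finCons μ n
  rw [← hcons.map_eq, integral_map hcons.measurable.aemeasurable
    hf.measurable.aestronglyMeasurable]
  exact integral_prod_symm _ ((hf.comp hcons.measurable).integrable _)

lemma integral_pi_fin_add {m n : ℕ} {f : (Fin (m + n) → X) → ℝ} (hf : BoundedMeasurable f) :
    ∫ x, f x ∂(Measure.pi fun _ => μ) =
      ∫ x, ∫ y, f (Fin.append x y) ∂(Measure.pi fun _ => μ) ∂(Measure.pi fun _ => μ) := by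
  have happ := measurePreserving_finAppend μ m n
  rw [← happ.map_eq, integral_map happ.measurable.aemeasurable
    hf.measurable.aestronglyMeasurable]
  exact integral_prod _ ((hf.comp happ.measurable).integrable _)

lemma integral_pi_fin_two {f : X → X → ℝ} (hf : BoundedMeasurable (Function.uncurry f)) :
    ∫ x : Fin 2 → X, f (x 0) (x 1) ∂(Measure.pi fun _ => μ) = ∫ y, ∫ z, f y z ∂μ ∂μ :=
  ((measurePreserving_finTwoArrow μ).integral_comp' (Function.uncurry f)).trans
    (integral_prod _ (hf.integrable _))

lemma ae_ae_cons_of_ae_pi {n : ℕ} {P : (Fin (n + 1) → X) → Prop}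
    (h : ∀ᵐ x ∂Measure.pi fun _ => μ, P x) :
    ∀ᵐ z ∂μ, ∀ᵐ x ∂Measure.pi fun _ => μ, P (Fin.cons z x) :=
  Measure.ae_ae_of_ae_prod ((measurePreserving_finCons μ n).quasiMeasurePreserving.ae h)

lemma ae_pi_ae_cons_of_ae_pi {n : ℕ} {P : (Fin (n + 1) → X) → Prop}
    (h : ∀ᵐ x ∂Measure.pi fun _ => μ, P x) :
    ∀ᵐ x ∂Measure.pi fun _ => μ, ∀ᵐ z ∂μ, P (Fin.cons z x) :=
  Measure.ae_ae_of_ae_prod (((measurePreserving_finCons μ n).comp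
    Measure.measurePreserving_swap).quasiMeasurePreserving.ae h)

lemma ae_of_ae_pi_fin_one {P : X → Prop}
    (h : ∀ᵐ x : Fin 1 → X ∂Measure.pi fun _ => μ, P (x 0)) : ∀ᵐ z ∂μ, P z :=
  (ae_ae_cons_of_ae_pi h).mono fun _ hz => hz.exists.elim fun _ => id

lemma ae_ae_of_ae_pi_fin_two {P : X → X → Prop}
    (h : ∀ᵐ x : Fin 2 → X ∂Measure.pi fun _ => μ, P (x 0) (x 1)) : ∀ᵐ y ∂μ, ∀ᵐ z ∂μ, P y z :=
  (ae_ae_cons_of_ae_pi h).mono fun _ hy => ae_of_ae_pi_fin_one hy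

lemma ae_ae_ae_of_ae_pi_fin_three {P : X → X → X → Prop}
    (h : ∀ᵐ x : Fin 3 → X ∂Measure.pi fun _ => μ, P (x 0) (x 1) (x 2)) :
    ∀ᵐ w ∂μ, ∀ᵐ y ∂μ, ∀ᵐ z ∂μ, P w y z :=
  (ae_ae_cons_of_ae_pi h).mono fun _ hw => ae_ae_of_ae_pi_fin_two hw

lemma ae_pi_comp_of_ae_pi {ι κ : Type*} [Fintype ι] [Fintype κ] {e : ι → κ} (he : e.Injective)
    {P : (ι → X) → Prop} (h : ∀ᵐ x ∂Measure.pi fun _ => μ, P x) :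
    ∀ᵐ x : κ → X ∂Measure.pi fun _ => μ, P fun i => x (e i) :=
  (measurePreserving_comp_of_injective he).quasiMeasurePreserving.ae h

lemma ae_pi_apply_of_ae {ι : Type*} [Fintype ι] {P : X → Prop} (h : ∀ᵐ z ∂μ, P z) (i : ι) :
    ∀ᵐ x : ι → X ∂Measure.pi fun _ => μ, P (x i) :=
  (measurePreserving_eval (fun _ : ι => μ) i).quasiMeasurePreserving.ae h

lemma ae_pi_pair_of_ae_ae {ι : Type*} [Fintype ι] {P : X → X → Prop}
    (hP : MeasurableSet {p : X × X | P p.1 p.2}) (h : ∀ᵐ y ∂μ, ∀ᵐ z ∂μ, P y z) {i j : ι}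
    (hij : i ≠ j) : ∀ᵐ x : ι → X ∂Measure.pi fun _ => μ, P (x i) (x j) := by
  have h2 : ∀ᵐ x : Fin 2 → X ∂Measure.pi fun _ => μ, P (x 0) (x 1) :=
    (measurePreserving_finTwoArrow μ).quasiMeasurePreserving.ae
      ((Measure.ae_prod_mem_iff_ae_ae_mem hP).2 h)
  have he : Function.Injective ![i, j] := by
    simpa [Function.Injective, Fin.forall_fin_two, hij] using hij.symm
  exact ae_pi_comp_of_ae_pi he h2

end ProductMeasure

/-! ### Graphons and densities -/

/-- A graphon on a measurable space: a symmetric measurable kernel with values in `[0,1]`. -/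
structure IsGraphon {X : Type*} [MeasurableSpace X] (W : X → X → ℝ) : Prop where
  measurable : Measurable (Function.uncurry W)
  symm : ∀ x y, W x y = W y x
  nonneg : ∀ x y, 0 ≤ W x y
  le_one : ∀ x y, W x y ≤ 1

/-- The homomorphism density of `G` in a kernel on an arbitrary measure space; it covers both
`homDensity` and `tUB`. -/
def kernelDensity {X : Type*} [MeasurableSpace X] {n : ℕ} (G : SimpleGraph (Fin n))
    (μ : Measure X) (W : X → X → ℝ) : ℝ :=
  ∫ x : Fin n → X,
    ∏ p ∈ Finset.univ.filter (fun p : Fin n × Fin n => p.1 < p.2 ∧ G.Adj p.1 p.2),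
      W (x p.1) (x p.2) ∂(Measure.pi fun _ => μ)

/-- Two kernels, on possibly different spaces, have the same densities of all graphs on `n`
vertices. -/
def SameDensities {X Y : Type*} [MeasurableSpace X] [MeasurableSpace Y] (n : ℕ) (μ : Measure X)
    (W : X → X → ℝ) (ν : Measure Y) (V : Y → Y → ℝ) : Prop :=
  ∀ G : SimpleGraph (Fin n), kernelDensity G μ W = kernelDensity G ν V

/-- The values of a kernel on all pairs of entries of a tuple. -/
def edgeValues {X ι : Type*} (W : X → X → ℝ) (x : ι → X) : ι × ι → ℝ :=
  fun p => W (x p.1) (x p.2)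

namespace IsGraphon

variable {X Y : Type*} [MeasurableSpace X] [MeasurableSpace Y] {W : X → X → ℝ}

lemma compl (hW : IsGraphon W) : IsGraphon fun x y => 1 - W x y where
  measurable := measurable_const.sub hW.measurable
  symm x y := by rw [hW.symm x y]
  nonneg x y := sub_nonneg.2 (hW.le_one x y)
  le_one x y := sub_le_self _ (hW.nonneg x y)

lemma boundedMeasurable_comp (hW : IsGraphon W) {f g : Y → X} (hf : Measurable f)
    (hg : Measurable g) : BoundedMeasurable fun y => W (f y) (g y) :=
  ⟨hW.measurable.comp (hf.prodMk hg), 1,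
    fun y => abs_le.2 ⟨by linarith [hW.nonneg (f y) (g y)], hW.le_one _ _⟩⟩

lemma boundedMeasurable_right (hW : IsGraphon W) (x : X) : BoundedMeasurable fun z => W x z :=
  hW.boundedMeasurable_comp measurable_const measurable_id

lemma boundedMeasurable_edgeValues {ι : Type*} (hW : IsGraphon W) (p : ι × ι) :
    BoundedMeasurable fun x : ι → X => edgeValues W x p :=
  hW.boundedMeasurable_comp (measurable_pi_apply _) (measurable_pi_apply _)

end IsGraphon

/-! ### Multilinear test polynomials -/

/-- The real polynomial functions in the variables `S` that have degree at most one in each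
variable: evaluated at the kernel values of a tuple, these are the functions whose integral is a
linear combination of homomorphism densities of simple graphs. -/
def multilinearPoly {ι : Type*} (S : Set ι) : Submodule ℝ ((ι → ℝ) → ℝ) :=
  Submodule.span ℝ ((fun (T : Finset ι) (w : ι → ℝ) => ∏ e ∈ T, w e) '' {T | (T : Set ι) ⊆ S})

namespace multilinearPoly

variable {ι κ : Type*} {S T : Set ι} {f g : (ι → ℝ) → ℝ}

lemma mono (h : S ⊆ T) (hf : f ∈ multilinearPoly S) : f ∈ multilinearPoly T :=
  Submodule.span_mono (Set.image_mono fun _ hU => Set.Subset.trans hU h) hf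

lemma const_mem (S : Set ι) (c : ℝ) : (fun _ => c) ∈ multilinearPoly S := by
  have hone : (fun _ => 1) ∈ multilinearPoly S :=
    Submodule.subset_span ⟨∅, by simp, funext fun _ => Finset.prod_empty⟩
  convert (multilinearPoly S).smul_mem c hone using 1
  funext w
  simp

lemma var_mem {e : ι} (he : e ∈ S) : (fun w => w e) ∈ multilinearPoly S :=
  Submodule.subset_span ⟨{e}, by simpa using he, funext fun _ => Finset.prod_singleton _ _⟩

lemma add_mem (hf : f ∈ multilinearPoly S) (hg : g ∈ multilinearPoly S) :
    (fun w => f w + g w) ∈ multilinearPoly S :=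
  (multilinearPoly S).add_mem hf hg

lemma sub_mem (hf : f ∈ multilinearPoly S) (hg : g ∈ multilinearPoly S) :
    (fun w => f w - g w) ∈ multilinearPoly S :=
  (multilinearPoly S).sub_mem hf hg

lemma const_mul_mem (c : ℝ) (hf : f ∈ multilinearPoly S) :
    (fun w => c * f w) ∈ multilinearPoly S :=
  (multilinearPoly S).smul_mem c hf

lemma mul_mem (h : Disjoint S T) (hf : f ∈ multilinearPoly S) (hg : g ∈ multilinearPoly T) :
    (fun w => f w * g w) ∈ multilinearPoly (S ∪ T) := by
  have hfg : f * g ∈ multilinearPoly S * multilinearPoly T := Submodule.mul_mem_mul hf hg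
  rw [multilinearPoly, multilinearPoly, Submodule.span_mul_span] at hfg
  refine Submodule.span_mono ?_ hfg
  rintro _ ⟨_, ⟨A, hA, rfl⟩, _, ⟨B, hB, rfl⟩, rfl⟩
  have hAB : Disjoint A B := Finset.disjoint_coe.1 (Set.disjoint_of_subset hA hB h)
  refine ⟨A ∪ B, ?_, funext fun w => Finset.prod_union hAB⟩
  simpa only [Set.mem_ofPred_eq, Finset.coe_union] using Set.union_subset_union hA hB

lemma prod_mem {g : ι → (ι → ℝ) → ℝ} (hg : ∀ i, g i ∈ multilinearPoly {i}) (T : Finset ι) :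
    (fun w => ∏ i ∈ T, g i w) ∈ multilinearPoly (T : Set ι) := by
  induction T using Finset.induction_on with
  | empty => simpa only [Finset.prod_empty] using const_mem _ 1
  | insert i T hi ih =>
    simp only [Finset.prod_insert hi, Finset.coe_insert]
    exact mul_mem (Set.disjoint_singleton_left.2 hi) (hg i) ih

lemma comp_mem {e : ι → κ} (he : e.Injective) (hf : f ∈ multilinearPoly S) :
    (fun w : κ → ℝ => f fun i => w (e i)) ∈ multilinearPoly (e '' S) := by
  induction hf using Submodule.span_induction with
  | mem f hf =>
    obtain ⟨T, hT, rfl⟩ := hf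
    refine Submodule.subset_span ⟨T.image e, ?_, funext fun w => Finset.prod_image he.injOn⟩
    simpa only [Set.mem_ofPred_eq, Finset.coe_image] using Set.image_mono hT
  | zero => exact Submodule.zero_mem _
  | add f g _ _ hf hg => exact Submodule.add_mem _ hf hg
  | smul c f _ hf => exact Submodule.smul_mem _ c hf

end multilinearPoly

lemma BoundedMeasurable.multilinearPoly_comp {X ι : Type*} [MeasurableSpace X] {S : Set ι}
    {f : (ι → ℝ) → ℝ} (hf : f ∈ multilinearPoly S) {g : ι → X → ℝ}
    (hg : ∀ i, BoundedMeasurable (g i)) : BoundedMeasurable fun x => f fun i => g i x := by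
  induction hf using Submodule.span_induction with
  | mem f hf =>
    obtain ⟨T, -, rfl⟩ := hf
    exact BoundedMeasurable.prod T hg
  | zero => exact BoundedMeasurable.const 0
  | add f g _ _ hf hg => exact hf.add hg
  | smul c f _ hf => exact (BoundedMeasurable.const c).mul hf

lemma IsGraphon.boundedMeasurable_multilinearPoly {X ι : Type*} [MeasurableSpace X]
    {W : X → X → ℝ} (hW : IsGraphon W) {S : Set (ι × ι)} {f : (ι × ι → ℝ) → ℝ}
    (hf : f ∈ multilinearPoly S) : BoundedMeasurable fun x : ι → X => f (edgeValues W x) :=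
  .multilinearPoly_comp hf hW.boundedMeasurable_edgeValues

/-- The pairs carrying the edge variables of test polynomials: one orientation of each edge. -/
def orderedPairs (n : ℕ) : Set (Fin n × Fin n) := {p | p.1 < p.2}

lemma exists_simpleGraph_of_subset_orderedPairs {n : ℕ} {T : Finset (Fin n × Fin n)}
    (hT : (T : Set (Fin n × Fin n)) ⊆ orderedPairs n) :
    ∃ G : SimpleGraph (Fin n),
      Finset.univ.filter (fun p : Fin n × Fin n => p.1 < p.2 ∧ G.Adj p.1 p.2) = T := by
  have hlt {i j} (h : (i, j) ∈ T) : i < j := hT h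
  refine ⟨SimpleGraph.fromRel fun i j => (i, j) ∈ T, Finset.ext fun ⟨i, j⟩ => ?_⟩
  simp only [Finset.mem_filter, Finset.mem_univ, true_and, SimpleGraph.fromRel_adj]
  constructor
  · rintro ⟨hij, -, h | h⟩
    exacts [h, absurd (hlt h) hij.not_gt]
  · exact fun h => ⟨hlt h, (hlt h).ne, Or.inl h⟩

namespace SameDensities

variable {X Y : Type*} [MeasurableSpace X] [MeasurableSpace Y] {n : ℕ}
  {μ : Measure X} [IsProbabilityMeasure μ] {ν : Measure Y} [IsProbabilityMeasure ν]
  {W : X → X → ℝ} {V : Y → Y → ℝ}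

theorem integral_multilinearPoly_eq (h : SameDensities n μ W ν V) (hW : IsGraphon W)
    (hV : IsGraphon V) {f : (Fin n × Fin n → ℝ) → ℝ} (hf : f ∈ multilinearPoly (orderedPairs n)) :
    ∫ x, f (edgeValues W x) ∂(Measure.pi fun _ => μ) =
      ∫ y, f (edgeValues V y) ∂(Measure.pi fun _ => ν) := by
  induction hf using Submodule.span_induction with
  | mem f hf =>
    obtain ⟨T, hT, rfl⟩ := hf
    obtain ⟨G, rfl⟩ := exists_simpleGraph_of_subset_orderedPairs hT
    exact h G
  | zero => simp only [Pi.zero_apply, integral_zero]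
  | add f g hf hg ihf ihg =>
    simp only [Pi.add_apply]
    rw [integral_add ((hW.boundedMeasurable_multilinearPoly hf).integrable _)
      ((hW.boundedMeasurable_multilinearPoly hg).integrable _), ihf, ihg,
      integral_add ((hV.boundedMeasurable_multilinearPoly hf).integrable _)
      ((hV.boundedMeasurable_multilinearPoly hg).integrable _)]
  | smul c f _ ih =>
    simp only [Pi.smul_apply]
    rw [integral_smul, integral_smul, ih]

theorem compl (h : SameDensities n μ W ν V) (hW : IsGraphon W) (hV : IsGraphon V) :
    SameDensities n μ (fun x y => 1 - W x y) ν (fun x y => 1 - V x y) := fun _ =>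
  h.integral_multilinearPoly_eq hW hV <|
    multilinearPoly.mono (fun _ hp => (Finset.mem_filter.1 hp).2.1) <| multilinearPoly.prod_mem
      (fun _ => multilinearPoly.sub_mem (multilinearPoly.const_mem _ 1)
        (multilinearPoly.var_mem rfl)) _

theorem ae_eq_zero_of_nonneg (h : SameDensities n μ W ν V) (hW : IsGraphon W) (hV : IsGraphon V)
    {f : (Fin n × Fin n → ℝ) → ℝ} (hf : f ∈ multilinearPoly (orderedPairs n))
    (hnonneg : ∀ x, 0 ≤ f (edgeValues W x))
    (hzero : ∀ᵐ y ∂Measure.pi fun _ => ν, f (edgeValues V y) = 0) :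
    ∀ᵐ x ∂Measure.pi fun _ => μ, f (edgeValues W x) = 0 :=
  (hW.boundedMeasurable_multilinearPoly hf).ae_eq_zero_of_integral_eq_zero hnonneg <|
    (h.integral_multilinearPoly_eq hW hV hf).trans (integral_eq_zero_of_ae hzero)

end SameDensities

section RootedSquare

variable {k m : ℕ}

/-- The edge positions that are not contained in the first `k` vertices, the roots. -/
def nonRootPairs (k m : ℕ) : Set (Fin (k + m) × Fin (k + m)) := {p | p.1 < p.2 ∧ k ≤ p.2.val}

/-- The inclusion of `k` roots and the second of two disjoint blocks of `m` vertices. -/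
def secondBlock (k m : ℕ) : Fin (k + m) → Fin (k + m + m) :=
  Fin.append (Fin.castAdd m ∘ Fin.castAdd m) (Fin.natAdd (k + m))

/-- Given a polynomial `q` on `k` roots and a polynomial `f` on the roots and `m` free vertices,
the product of `q` with two copies of `f` glued along the roots: its integral is the integral of
`q` times the square of the partial integral of `f`. -/
def rootedSquare (q : (Fin k × Fin k → ℝ) → ℝ) (f : (Fin (k + m) × Fin (k + m) → ℝ) → ℝ)
    (w : Fin (k + m + m) × Fin (k + m + m) → ℝ) : ℝ :=
  (q fun p => w (p.map (Fin.castAdd m ∘ Fin.castAdd m) (Fin.castAdd m ∘ Fin.castAdd m))) *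
    (f fun p => w (p.map (Fin.castAdd m) (Fin.castAdd m))) *
    f fun p => w (p.map (secondBlock k m) (secondBlock k m))

lemma secondBlock_strictMono : StrictMono (secondBlock k m) := by
  intro i j
  refine Fin.addCases (fun i => ?_) (fun i => ?_) i <;>
    refine Fin.addCases (fun j => ?_) (fun j => ?_) j <;>
    simp only [secondBlock, Fin.append_left, Fin.append_right, Fin.lt_def, Function.comp_apply,
      Fin.val_castAdd, Fin.val_natAdd] <;> omega

lemma val_secondBlock_of_le {i : Fin (k + m)} (hi : k ≤ i.val) :
    k + m ≤ (secondBlock k m i).val := by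
  induction i using Fin.addCases with
  | left i => exact absurd hi (not_le.2 i.isLt)
  | right i => simp only [secondBlock, Fin.append_right, Fin.val_natAdd, Nat.le_add_right]

lemma rootedSquare_mem {q : (Fin k × Fin k → ℝ) → ℝ} (hq : q ∈ multilinearPoly (orderedPairs k))
    {f : (Fin (k + m) × Fin (k + m) → ℝ) → ℝ} (hf : f ∈ multilinearPoly (nonRootPairs k m)) :
    rootedSquare q f ∈ multilinearPoly (orderedPairs (k + m + m)) := by
  have hroot : StrictMono (Fin.castAdd m ∘ Fin.castAdd m : Fin k → Fin (k + m + m)) :=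
    (Fin.strictMono_castAdd m).comp (Fin.strictMono_castAdd m)
  have hfirst : StrictMono (Fin.castAdd m : Fin (k + m) → _) := Fin.strictMono_castAdd m
  refine multilinearPoly.mono ?_ <| multilinearPoly.mul_mem ?_ (multilinearPoly.mul_mem ?_
    (multilinearPoly.comp_mem (hroot.injective.prodMap hroot.injective) hq)
    (multilinearPoly.comp_mem (hfirst.injective.prodMap hfirst.injective) hf))
    (multilinearPoly.comp_mem (secondBlock_strictMono.injective.prodMap
      secondBlock_strictMono.injective) hf)
  · rintro _ ((⟨p, hp, rfl⟩ | ⟨p, hp, rfl⟩) | ⟨p, hp, rfl⟩)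
    exacts [hroot hp, hfirst hp.1, secondBlock_strictMono hp.1]
  · rw [Set.disjoint_left]
    rintro _ hp ⟨p', hp', rfl⟩
    have hge := val_secondBlock_of_le hp'.2
    rcases hp with ⟨p, -, hpp⟩ | ⟨p, -, hpp⟩ <;> have hval := congrArg (·.2.val) hpp <;>
      simp only [Prod.map_snd, Function.comp_apply, Fin.val_castAdd] at hval <;> omega
  · rw [Set.disjoint_left]
    rintro _ ⟨p, -, rfl⟩ ⟨p', hp', hpp⟩
    have hval := congrArg (·.2.val) hpp
    have hge := hp'.2
    simp only [Prod.map_snd, Function.comp_apply, Fin.val_castAdd] at hval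
    omega

variable {X : Type*}

lemma append_append_comp_secondBlock (x : Fin k → X) (y z : Fin m → X) :
    Fin.append (Fin.append x y) z ∘ secondBlock k m = Fin.append x z := by
  funext i
  induction i using Fin.addCases with
  | left i => simp only [secondBlock, Function.comp_apply, Fin.append_left]
  | right i => simp only [secondBlock, Function.comp_apply, Fin.append_right]

lemma rootedSquare_edgeValues (q : (Fin k × Fin k → ℝ) → ℝ)
    (f : (Fin (k + m) × Fin (k + m) → ℝ) → ℝ) (W : X → X → ℝ) (x : Fin k → X) (y z : Fin m → X) :
    rootedSquare q f (edgeValues W (Fin.append (Fin.append x y) z)) =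
      q (edgeValues W x) * f (edgeValues W (Fin.append x y)) *
        f (edgeValues W (Fin.append x z)) := by
  rw [← append_append_comp_secondBlock x y z]
  simp only [rootedSquare, edgeValues, Prod.map_fst, Prod.map_snd, Function.comp_apply,
    Fin.append_left]
  rfl

variable [MeasurableSpace X] {μ : Measure X} [IsProbabilityMeasure μ] {W : X → X → ℝ}

lemma integral_rootedSquare (hW : IsGraphon W) {q : (Fin k × Fin k → ℝ) → ℝ}
    (hq : q ∈ multilinearPoly (orderedPairs k)) {f : (Fin (k + m) × Fin (k + m) → ℝ) → ℝ}
    (hf : f ∈ multilinearPoly (nonRootPairs k m)) :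
    ∫ x, rootedSquare q f (edgeValues W x) ∂(Measure.pi fun _ => μ) =
      ∫ x, q (edgeValues W x) *
        (∫ y, f (edgeValues W (Fin.append x y)) ∂(Measure.pi fun _ => μ)) ^ 2
        ∂(Measure.pi fun _ => μ) := by
  have hb := hW.boundedMeasurable_multilinearPoly (rootedSquare_mem hq hf)
  have happ := fun i j => (measurePreserving_finAppend μ i j).measurable
  rw [integral_pi_fin_add hb, integral_pi_fin_add ((hb.comp (happ (k + m) m)).integral_right _)]
  simp only [rootedSquare_edgeValues, integral_const_mul, integral_mul_const, pow_two, mul_assoc]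

/-- Root tuples where `q` does not vanish but the partial integral of `f` does not vanish either
are detected by the density of `rootedSquare q f`. -/
theorem SameDensities.ae_eq_zero_or_integral_eq_zero {Y : Type*} [MeasurableSpace Y]
    {ν : Measure Y} [IsProbabilityMeasure ν] {V : Y → Y → ℝ}
    (h : SameDensities (k + m + m) μ W ν V) (hW : IsGraphon W) (hV : IsGraphon V)
    {q : (Fin k × Fin k → ℝ) → ℝ} (hq : q ∈ multilinearPoly (orderedPairs k))
    (hnonneg : ∀ x, 0 ≤ q (edgeValues W x))
    {f : (Fin (k + m) × Fin (k + m) → ℝ) → ℝ} (hf : f ∈ multilinearPoly (nonRootPairs k m))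
    (hzero : ∀ᵐ y ∂Measure.pi fun _ => ν, q (edgeValues V y) = 0 ∨
      ∫ z, f (edgeValues V (Fin.append y z)) ∂(Measure.pi fun _ => ν) = 0) :
    ∀ᵐ x ∂Measure.pi fun _ => μ, q (edgeValues W x) = 0 ∨
      ∫ z, f (edgeValues W (Fin.append x z)) ∂(Measure.pi fun _ => μ) = 0 := by
  have hint := h.integral_multilinearPoly_eq hW hV (rootedSquare_mem hq hf)
  rw [integral_rootedSquare hW hq hf, integral_rootedSquare hV hq hf, integral_eq_zero_of_ae
    (hzero.mono fun y hy => by rcases hy with hy | hy <;> simp [hy])] at hint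
  have hpartial := (((hW.boundedMeasurable_multilinearPoly hf).comp
    (measurePreserving_finAppend μ k m).measurable).integral_right (Measure.pi fun _ => μ))
  have hb := (hW.boundedMeasurable_multilinearPoly hq).mul (hpartial.mul hpartial)
  simp only [← pow_two] at hb
  filter_upwards [hb.ae_eq_zero_of_integral_eq_zero
    (fun x => mul_nonneg (hnonneg x) (sq_nonneg _)) hint] with x hx
  exact (mul_eq_zero.1 hx).imp_right sq_eq_zero_iff.1

end RootedSquare

/-! ### The neighborhood distance -/

/-- The contribution of a vertex to the neighborhood distance of two vertices joined to it with
weights `u` and `v`. -/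
def distTerm (u v : ℝ) : ℝ := 3 / 2 * (u * (1 - v) + (1 - u) * v)

/-- The `L¹` distance of neighborhoods in a `{0,1}`-valued kernel, normalized so that it is
`2⁻ᵈ` for two points separated at depth `d` of the alternating binary tree. -/
def nbhdDist {X : Type*} [MeasurableSpace X] (μ : Measure X) (W : X → X → ℝ) (x y : X) : ℝ :=
  ∫ z, distTerm (W x z) (W y z) ∂μ

/-- Almost all points have the degree `p`. -/
def HasConstDegree {X : Type*} [MeasurableSpace X] (μ : Measure X) (p : ℝ) (W : X → X → ℝ) : Prop :=
  ∀ᵐ x ∂μ, ∫ z, W x z ∂μ = p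

/-- The distances of almost every point to its neighbors integrate to `c`. -/
def HasNeighborMoment {X : Type*} [MeasurableSpace X] (μ : Measure X) (c : ℝ) (W : X → X → ℝ) :
    Prop :=
  ∀ᵐ x ∂μ, ∫ z, W x z * nbhdDist μ W x z ∂μ = c

/-- For almost all adjacent `x` and `y`, the distances of `x` to the neighbors of `y` that are not
its own integrate to `c` times the square of the distance of `x` and `y`. In the alternating tree
these are the points that separate from `x` at the depths `δ x y + 1, δ x y + 3, …`. -/
def HasDescendantMoment {X : Type*} [MeasurableSpace X] (μ : Measure X) (c : ℝ)
    (W : X → X → ℝ) : Prop :=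
  ∀ᵐ x : Fin 2 → X ∂Measure.pi fun _ => μ, W (x 0) (x 1) = 0 ∨
    ∫ z, (1 - W (x 0) z) * W (x 1) z * nbhdDist μ W (x 0) z ∂μ =
      c * nbhdDist μ W (x 0) (x 1) ^ 2

/-- The weight with which `a, b, c, d` is an induced path. -/
def inducedPath {X : Type*} (W : X → X → ℝ) (a b c d : X) : ℝ :=
  W a b * W b c * W c d * (1 - W a c) * (1 - W b d) * (1 - W a d)

/-- The kernel has no induced path on four vertices. -/
def IsPathFree {X : Type*} [MeasurableSpace X] (μ : Measure X) (W : X → X → ℝ) : Prop :=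
  ∀ᵐ x : Fin 4 → X ∂Measure.pi fun _ => μ, inducedPath W (x 0) (x 1) (x 2) (x 3) = 0

lemma distTerm_comm (u v : ℝ) : distTerm u v = distTerm v u := by
  simp only [distTerm]
  ring

lemma distTerm_compl (u v : ℝ) : distTerm (1 - u) (1 - v) = distTerm u v := by
  simp only [distTerm]
  ring

lemma distTerm_nonneg {u v : ℝ} (hu : u ∈ Set.Icc 0 1) (hv : v ∈ Set.Icc 0 1) :
    0 ≤ distTerm u v := by
  have h1 := mul_nonneg hu.1 (sub_nonneg.2 hv.2)
  have h2 := mul_nonneg (sub_nonneg.2 hu.2) hv.1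
  rw [distTerm]
  linarith

lemma distTerm_triangle {u v w : ℝ} (hu : u ∈ Set.Icc 0 1) (hv : v ∈ Set.Icc 0 1)
    (hw : w ∈ Set.Icc 0 1) : distTerm u w ≤ distTerm u v + distTerm v w := by
  have h1 := mul_nonneg (mul_nonneg hv.1 (sub_nonneg.2 hu.2)) (sub_nonneg.2 hw.2)
  have h2 := mul_nonneg (mul_nonneg (sub_nonneg.2 hv.2) hu.1) hw.1
  simp only [distTerm]
  nlinarith

lemma inducedPath_compl {X : Type*} {W : X → X → ℝ} (hW : ∀ x y, W x y = W y x) (a b c d : X) :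
    inducedPath (fun x y => 1 - W x y) a b c d = inducedPath W c a d b := by
  simp only [inducedPath, hW c a, hW d b, hW c b]
  ring

section NbhdDist

variable {X : Type*} [MeasurableSpace X] {μ : Measure X} {W : X → X → ℝ}

lemma nbhdDist_comm (x y : X) : nbhdDist μ W x y = nbhdDist μ W y x := by
  simp only [nbhdDist, distTerm_comm (W x _)]

lemma nbhdDist_compl : nbhdDist μ (fun x y => 1 - W x y) = nbhdDist μ W := by
  funext x y
  simp only [nbhdDist, distTerm_compl]

lemma inducedPath_nonneg (hW : IsGraphon W) (a b c d : X) : 0 ≤ inducedPath W a b c d :=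
  mul_nonneg (mul_nonneg (mul_nonneg (mul_nonneg (mul_nonneg (hW.nonneg _ _) (hW.nonneg _ _))
    (hW.nonneg _ _)) (hW.compl.nonneg _ _)) (hW.compl.nonneg _ _)) (hW.compl.nonneg _ _)

namespace IsGraphon

variable (hW : IsGraphon W)
include hW

lemma mem_Icc (x y : X) : W x y ∈ Set.Icc (0 : ℝ) 1 := ⟨hW.nonneg x y, hW.le_one x y⟩

lemma boundedMeasurable_distTerm {Y : Type*} [MeasurableSpace Y] {f g h : Y → X}
    (hf : Measurable f) (hg : Measurable g) (hh : Measurable h) :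
    BoundedMeasurable fun y => distTerm (W (f y) (h y)) (W (g y) (h y)) :=
  (BoundedMeasurable.const (3 / 2)).mul <|
    ((hW.boundedMeasurable_comp hf hh).mul (hW.compl.boundedMeasurable_comp hg hh)).add
      ((hW.compl.boundedMeasurable_comp hf hh).mul (hW.boundedMeasurable_comp hg hh))

lemma boundedMeasurable_distTerm_right (x y : X) :
    BoundedMeasurable fun z => distTerm (W x z) (W y z) :=
  hW.boundedMeasurable_distTerm measurable_const measurable_const measurable_id

variable [IsProbabilityMeasure μ]

lemma boundedMeasurable_nbhdDist : BoundedMeasurable (Function.uncurry (nbhdDist μ W)) :=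
  (hW.boundedMeasurable_distTerm (Y := (X × X) × X) measurable_fst.fst measurable_fst.snd
    measurable_snd).integral_right μ

lemma boundedMeasurable_nbhdDist_right (x : X) : BoundedMeasurable fun z => nbhdDist μ W x z :=
  hW.boundedMeasurable_nbhdDist.comp (measurable_const.prodMk measurable_id)

lemma nbhdDist_triangle (x y z : X) :
    nbhdDist μ W x z ≤ nbhdDist μ W x y + nbhdDist μ W y z := by
  have hxy := (hW.boundedMeasurable_distTerm_right x y).integrable μ
  have hyz := (hW.boundedMeasurable_distTerm_right y z).integrable μ
  rw [nbhdDist, nbhdDist, nbhdDist, ← integral_add hxy hyz]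
  exact integral_mono ((hW.boundedMeasurable_distTerm_right x z).integrable μ) (hxy.add hyz)
    fun w => distTerm_triangle (hW.mem_Icc x w) (hW.mem_Icc y w) (hW.mem_Icc z w)

lemma integral_compl_mul_eq_of_degree_eq {x y : X} (hxy : ∫ z, W x z ∂μ = ∫ z, W y z ∂μ) :
    ∫ z, (1 - W x z) * W y z ∂μ = nbhdDist μ W x y / 3 := by
  have hx := hW.boundedMeasurable_right x
  have hy := hW.boundedMeasurable_right y
  have hc := (hW.compl.boundedMeasurable_right x).mul hy
  have hsplit : ∀ z, distTerm (W x z) (W y z) =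
      3 * ((1 - W x z) * W y z) + 3 / 2 * (W x z - W y z) := fun z => by
    rw [distTerm]
    ring
  simp only [nbhdDist, hsplit]
  rw [integral_add ((hc.integrable μ).const_mul 3) (((hx.sub hy).integrable μ).const_mul _),
    integral_const_mul, integral_const_mul, integral_sub (hx.integrable μ) (hy.integrable μ), hxy]
  ring

end IsGraphon

namespace IsPathFree

variable [IsProbabilityMeasure μ]

lemma compl (h : IsPathFree μ W) (hW : ∀ x y, W x y = W y x) :
    IsPathFree μ fun x y => 1 - W x y := by
  simp only [IsPathFree, inducedPath_compl hW]
  have he : Function.Injective ![(2 : Fin 4), 0, 3, 1] := by decide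
  exact ae_pi_comp_of_ae_pi he h

end IsPathFree

end NbhdDist

/-! ### Forcing the conditions by densities -/

namespace multilinearPoly

variable {ι : Type*}

lemma distTerm_mem {e e' : ι} (h : e ≠ e') :
    (fun w => distTerm (w e) (w e')) ∈ multilinearPoly {e, e'} := by
  have hprod := mul_mem (Set.disjoint_singleton.2 h) (var_mem (Set.mem_singleton e))
    (sub_mem (const_mem _ 1) (var_mem (Set.mem_singleton e')))
  have hprod' := mul_mem (Set.disjoint_singleton.2 h)
    (sub_mem (const_mem _ 1) (var_mem (Set.mem_singleton e))) (var_mem (Set.mem_singleton e'))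
  exact const_mul_mem _ (add_mem hprod hprod')

end multilinearPoly

section Transfer

variable {X Y : Type*} [MeasurableSpace X] [MeasurableSpace Y]
  {μ : Measure X} [IsProbabilityMeasure μ] {ν : Measure Y} [IsProbabilityMeasure ν]
  {W : X → X → ℝ} {V : Y → Y → ℝ}

/-- The deviation of the degree of the root `0` from `p`. -/
def degreePoly (p : ℝ) (w : Fin (1 + 1) × Fin (1 + 1) → ℝ) : ℝ := w (0, 1) - p

/-- The deviation of the neighbor moment of the root `0` from `c`. -/
def neighborPoly (c : ℝ) (w : Fin (1 + 2) × Fin (1 + 2) → ℝ) : ℝ :=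
  w (0, 1) * distTerm (w (0, 2)) (w (1, 2)) - c

/-- The deviation in the descendant moment condition for the roots `0` and `1`. -/
def descendantPoly (c : ℝ) (w : Fin (2 + 2) × Fin (2 + 2) → ℝ) : ℝ :=
  (1 - w (0, 2)) * w (1, 2) * distTerm (w (0, 3)) (w (2, 3)) -
    c * (distTerm (w (0, 2)) (w (1, 2)) * distTerm (w (0, 3)) (w (1, 3)))

/-- The polynomial expressing `inducedPath` on the vertices `0, 1, 2, 3`. -/
def pathPoly (w : Fin 4 × Fin 4 → ℝ) : ℝ :=
  w (0, 1) * w (1, 2) * w (2, 3) * (1 - w (0, 2)) * (1 - w (1, 3)) * (1 - w (0, 3))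

lemma degreePoly_mem (p : ℝ) : degreePoly p ∈ multilinearPoly (nonRootPairs 1 1) :=
  multilinearPoly.sub_mem (multilinearPoly.var_mem (by simp [nonRootPairs]))
    (multilinearPoly.const_mem _ p)

lemma neighborPoly_mem (c : ℝ) : neighborPoly c ∈ multilinearPoly (nonRootPairs 1 2) := by
  refine multilinearPoly.sub_mem (multilinearPoly.mono ?_ (multilinearPoly.mul_mem ?_
    (multilinearPoly.var_mem (Set.mem_singleton _)) (multilinearPoly.distTerm_mem (by decide))))
    (multilinearPoly.const_mem _ c)
  · rintro p (rfl | rfl | rfl) <;> simp [nonRootPairs]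
  · simp

lemma descendantPoly_mem (c : ℝ) : descendantPoly c ∈ multilinearPoly (nonRootPairs 2 2) := by
  have hne {e : Fin (2 + 2) × Fin (2 + 2)} := multilinearPoly.sub_mem
    (multilinearPoly.const_mem {e} 1) (multilinearPoly.var_mem (Set.mem_singleton _))
  refine multilinearPoly.sub_mem
    (multilinearPoly.mono ?_ (multilinearPoly.mul_mem ?_ (multilinearPoly.mul_mem ?_ hne
      (multilinearPoly.var_mem (Set.mem_singleton _))) (multilinearPoly.distTerm_mem (by decide))))
    (multilinearPoly.const_mul_mem c (multilinearPoly.mono ?_ (multilinearPoly.mul_mem ?_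
      (multilinearPoly.distTerm_mem (by decide)) (multilinearPoly.distTerm_mem (by decide)))))
  · rintro p ((rfl | rfl) | rfl | rfl) <;> simp [nonRootPairs]
  · simp
  · simp
  · rintro p ((rfl | rfl) | rfl | rfl) <;> simp [nonRootPairs]
  · simp

lemma pathPoly_mem : pathPoly ∈ multilinearPoly (orderedPairs 4) := by
  have hvar {e : Fin 4 × Fin 4} := multilinearPoly.var_mem (Set.mem_singleton e)
  have hne {e : Fin 4 × Fin 4} := multilinearPoly.sub_mem
    (multilinearPoly.const_mem {e} 1) (multilinearPoly.var_mem (Set.mem_singleton _))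
  refine multilinearPoly.mono ?_ (multilinearPoly.mul_mem ?_ (multilinearPoly.mul_mem ?_
    (multilinearPoly.mul_mem ?_ (multilinearPoly.mul_mem ?_ (multilinearPoly.mul_mem ?_
    hvar hvar) hvar) hne) hne) hne)
  · rintro p (((((rfl | rfl) | rfl) | rfl) | rfl) | rfl) <;> simp [orderedPairs]
  all_goals simp

lemma integral_degreePoly (hW : IsGraphon W) (p : ℝ) (x : Fin 1 → X) :
    ∫ y, degreePoly p (edgeValues W (Fin.append x y)) ∂(Measure.pi fun _ => μ) =
      ∫ z, W (x 0) z ∂μ - p := by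
  refine (integral_pi_fin_one fun z => W (x 0) z - p).trans ?_
  rw [integral_sub ((hW.boundedMeasurable_right _).integrable μ) (integrable_const p)]
  simp

lemma integral_neighborPoly (hW : IsGraphon W) (c : ℝ) (x : Fin 1 → X) :
    ∫ y, neighborPoly c (edgeValues W (Fin.append x y)) ∂(Measure.pi fun _ => μ) =
      ∫ z, W (x 0) z * nbhdDist μ W (x 0) z ∂μ - c := by
  have hz := hW.boundedMeasurable_right (x 0)
  have hterm := hW.boundedMeasurable_distTerm (Y := X × X) (measurable_const (a := x 0))
    measurable_fst measurable_snd
  refine (integral_pi_fin_two (f := fun z z' => W (x 0) z * distTerm (W (x 0) z') (W z z') - c)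
    (((hz.comp measurable_fst).mul hterm).sub (.const c))).trans ?_
  have hinner : ∀ z, ∫ z', (W (x 0) z * distTerm (W (x 0) z') (W z z') - c) ∂μ =
      W (x 0) z * nbhdDist μ W (x 0) z - c := fun z => by
    rw [integral_sub (((hW.boundedMeasurable_distTerm_right _ z).integrable μ).const_mul _)
      (integrable_const c), integral_const_mul, nbhdDist]
    simp
  simp only [hinner]
  rw [integral_sub ((hz.mul (hW.boundedMeasurable_nbhdDist_right _)).integrable μ)
    (integrable_const c)]
  simp

lemma integral_descendantPoly (hW : IsGraphon W) (c : ℝ) (x : Fin 2 → X) :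
    ∫ y, descendantPoly c (edgeValues W (Fin.append x y)) ∂(Measure.pi fun _ => μ) =
      ∫ z, (1 - W (x 0) z) * W (x 1) z * nbhdDist μ W (x 0) z ∂μ -
        c * nbhdDist μ W (x 0) (x 1) ^ 2 := by
  have hz := (hW.compl.boundedMeasurable_right (x 0)).mul (hW.boundedMeasurable_right (x 1))
  have hd := hW.boundedMeasurable_distTerm_right (x 0) (x 1)
  have hterm := hW.boundedMeasurable_distTerm (Y := X × X) (measurable_const (a := x 0))
    measurable_fst measurable_snd
  refine (integral_pi_fin_two (f := fun z z' => (1 - W (x 0) z) * W (x 1) z *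
      distTerm (W (x 0) z') (W z z') - c * (distTerm (W (x 0) z) (W (x 1) z) *
      distTerm (W (x 0) z') (W (x 1) z'))) (((hz.comp measurable_fst).mul hterm).sub
      ((BoundedMeasurable.const c).mul ((hd.comp measurable_fst).mul
        (hd.comp measurable_snd))))).trans ?_
  simp only [← mul_assoc c]
  have hinner : ∀ z, ∫ z', ((1 - W (x 0) z) * W (x 1) z * distTerm (W (x 0) z') (W z z') -
      c * distTerm (W (x 0) z) (W (x 1) z) * distTerm (W (x 0) z') (W (x 1) z')) ∂μ =
      (1 - W (x 0) z) * W (x 1) z * nbhdDist μ W (x 0) z -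
        c * distTerm (W (x 0) z) (W (x 1) z) * nbhdDist μ W (x 0) (x 1) := fun z => by
    rw [integral_sub (((hW.boundedMeasurable_distTerm_right _ z).integrable μ).const_mul _)
      ((hd.integrable μ).const_mul _), integral_const_mul, integral_const_mul, nbhdDist, nbhdDist]
  simp only [hinner]
  rw [integral_sub ((hz.mul (hW.boundedMeasurable_nbhdDist_right _)).integrable μ)
    (((hd.integrable μ).const_mul _).mul_const _), integral_mul_const, integral_const_mul,
    ← nbhdDist]
  ring

namespace SameDensities

variable (hW : IsGraphon W) (hV : IsGraphon V)
include hW hV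

lemma hasConstDegree (h : SameDensities 3 μ W ν V) {p : ℝ} (hdeg : HasConstDegree ν p V) :
    HasConstDegree μ p W := by
  have hroots := SameDensities.ae_eq_zero_or_integral_eq_zero h hW hV
    (multilinearPoly.const_mem _ 1) (fun _ => zero_le_one) (degreePoly_mem p)
    ((ae_pi_apply_of_ae hdeg 0).mono fun y hy => Or.inr <| by
      rw [integral_degreePoly hV, hy, sub_self])
  simp only [one_ne_zero, false_or, integral_degreePoly hW, sub_eq_zero] at hroots
  exact ae_of_ae_pi_fin_one hroots

lemma hasNeighborMoment (h : SameDensities 5 μ W ν V) {c : ℝ} (hmom : HasNeighborMoment ν c V) :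
    HasNeighborMoment μ c W := by
  have hroots := SameDensities.ae_eq_zero_or_integral_eq_zero h hW hV
    (multilinearPoly.const_mem _ 1) (fun _ => zero_le_one) (neighborPoly_mem c)
    ((ae_pi_apply_of_ae hmom 0).mono fun y hy => Or.inr <| by
      rw [integral_neighborPoly hV, hy, sub_self])
  simp only [one_ne_zero, false_or, integral_neighborPoly hW, sub_eq_zero] at hroots
  exact ae_of_ae_pi_fin_one hroots

lemma hasDescendantMoment (h : SameDensities 6 μ W ν V) {c : ℝ}
    (hmom : HasDescendantMoment ν c V) : HasDescendantMoment μ c W := by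
  have hroots := SameDensities.ae_eq_zero_or_integral_eq_zero h hW hV
    (multilinearPoly.var_mem (e := ((0 : Fin 2), (1 : Fin 2))) (by simp [orderedPairs]))
    (fun x => hW.nonneg (x 0) (x 1)) (descendantPoly_mem c)
    (hmom.mono fun y hy => hy.imp id fun hy => by rw [integral_descendantPoly hV, hy, sub_self])
  simp only [integral_descendantPoly hW, sub_eq_zero] at hroots
  exact hroots

lemma isPathFree (h : SameDensities 4 μ W ν V) (hpath : IsPathFree ν V) : IsPathFree μ W :=
  h.ae_eq_zero_of_nonneg hW hV pathPoly_mem (fun _ => inducedPath_nonneg hW _ _ _ _) hpath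

end SameDensities

end Transfer

/-! ### Alternating binary trees -/

/-- `f` is distributed as the depth at which a random branch of the infinite binary tree leaves a
fixed branch. -/
def HasGeometricTail {X : Type*} [MeasurableSpace X] (μ : Measure X) (f : X → ℕ) : Prop :=
  ∀ d : ℕ, μ.real {y | d ≤ f y} = (1 / 2) ^ d

/-- `p`, `q` and `r` can be the depths at which the three pairs of three leaves of a tree
separate. -/
def IsUltrametricTriple (p q r : ℕ) : Prop := min p q ≤ r ∧ min q r ≤ p ∧ min p r ≤ q

/-- `δ` is, up to null sets, the separation depth of the points of `X` when these are regarded as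
random branches of the infinite binary tree. -/
structure IsBalancedTree {X : Type*} [MeasurableSpace X] (μ : Measure X) (δ : X → X → ℕ) :
    Prop where
  measurable : Measurable (Function.uncurry δ)
  symm : ∀ x y, δ x y = δ y x
  geometric : ∀ᵐ x ∂μ, HasGeometricTail μ (δ x)
  ultrametric : ∀ᵐ x : Fin 3 → X ∂Measure.pi fun _ => μ,
    IsUltrametricTriple (δ (x 0) (x 1)) (δ (x 0) (x 2)) (δ (x 1) (x 2))

/-- Adjacency in `W` alternates with the depth: two points are adjacent if they separate at a depth
of the same parity as `s`. -/
def IsAlternating {X : Type*} [MeasurableSpace X] (μ : Measure X) (δ : X → X → ℕ) (s : ℕ)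
    (W : X → X → ℝ) : Prop :=
  ∀ᵐ x : Fin 2 → X ∂Measure.pi fun _ => μ,
    W (x 0) (x 1) = if Even (δ (x 0) (x 1) + s) then 1 else 0

section AlternatingTree

variable {X : Type*} [MeasurableSpace X] {μ : Measure X} [IsProbabilityMeasure μ]

namespace HasGeometricTail

variable {f : X → ℕ} (hf : Measurable f) (hgeom : HasGeometricTail μ f)
include hf hgeom

lemma measureReal_eq (d : ℕ) : μ.real {y | f y = d} = (1 / 2) ^ (d + 1) := by
  have hdiff : {y | f y = d} = {y | d ≤ f y} \ {y | d + 1 ≤ f y} := by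
    ext y
    simp only [Set.mem_sdiff, Set.mem_ofPred_eq]
    omega
  have hsub : {y | d + 1 ≤ f y} ⊆ {y | d ≤ f y} := fun y hy => (Nat.le_succ d).trans hy
  rw [hdiff, measureReal_sdiff hsub (measurableSet_le measurable_const hf), hgeom, hgeom]
  ring

lemma integral_comp {g : ℕ → ℝ} (hg : ∃ C, ∀ n, |g n| ≤ C) :
    ∫ y, g (f y) ∂μ = ∑' d, (1 / 2 : ℝ) ^ (d + 1) * g d := by
  have hgm : BoundedMeasurable g := ⟨measurable_of_countable g, hg⟩
  have := Measure.isProbabilityMeasure_map (μ := μ) hf.aemeasurable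
  rw [← integral_map hf.aemeasurable hgm.measurable.aestronglyMeasurable,
    integral_countable (hgm.integrable _)]
  refine tsum_congr fun d => ?_
  rw [smul_eq_mul, map_measureReal_apply hf (measurableSet_singleton d)]
  exact congrArg (· * g d) (hgeom.measureReal_eq hf d)

lemma integral_pow_of_even (p : ℕ) {θ : ℝ} (h0 : 0 ≤ θ) (h1 : θ ≤ 1) :
    ∫ y, (if p ≤ f y ∧ Even (f y + p) then θ ^ f y else 0) ∂μ =
      (θ / 2) ^ p / 2 / (1 - θ ^ 2 / 4) := by
  rw [hgeom.integral_comp hf (g := fun d => if p ≤ d ∧ Even (d + p) then θ ^ d else 0)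
    ⟨1, fun d => by
      split_ifs
      · rw [abs_of_nonneg (by positivity)]
        exact pow_le_one₀ h0 h1
      · simp⟩]
  have hinj : Function.Injective fun i : ℕ => p + 2 * i := fun a b hab => by grind
  have hterm (i : ℕ) : (1 / 2 : ℝ) ^ (p + 2 * i + 1) *
      (if p ≤ p + 2 * i ∧ Even (p + 2 * i + p) then θ ^ (p + 2 * i) else 0) =
      (θ / 2) ^ p / 2 * (θ ^ 2 / 4) ^ i := by
    rw [if_pos ⟨Nat.le_add_right _ _, p + i, by ring⟩, show θ ^ 2 / 4 = (1 / 2 * θ) ^ 2 by ring,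
      ← pow_mul, show θ / 2 = 1 / 2 * θ by ring, mul_pow, mul_pow]
    ring
  rw [← hinj.tsum_eq, tsum_congr hterm, tsum_mul_left,
    tsum_geometric_of_lt_one (by positivity) (by nlinarith)]
  · ring
  · intro d hd
    have hmem : p ≤ d ∧ Even (d + p) := by
      by_contra h
      exact hd (by simp only [if_neg h, mul_zero])
    obtain ⟨hpd, k, hk⟩ := hmem
    exact ⟨k - p, by grind⟩

end HasGeometricTail

namespace IsBalancedTree

variable {δ : X → X → ℕ} (hδ : IsBalancedTree μ δ)
include hδ

omit [IsProbabilityMeasure μ] in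
lemma measurable_right (x : X) : Measurable (δ x) :=
  hδ.measurable.comp (measurable_const.prodMk measurable_id)

lemma ae_triple {ι : Type*} [Fintype ι] {i j k : ι} (hij : i ≠ j) (hik : i ≠ k) (hjk : j ≠ k) :
    ∀ᵐ x : ι → X ∂Measure.pi fun _ => μ,
      IsUltrametricTriple (δ (x i) (x j)) (δ (x i) (x k)) (δ (x j) (x k)) := by
  have he : Function.Injective ![i, j, k] := by
    intro a b
    fin_cases a <;> fin_cases b <;> simp [hij, hik, hjk, hij.symm, hik.symm, hjk.symm]
  exact ae_pi_comp_of_ae_pi he hδ.ultrametric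

lemma ae_ae_triple : ∀ᵐ x : Fin 2 → X ∂Measure.pi fun _ => μ, ∀ᵐ z ∂μ,
    IsUltrametricTriple (δ (x 0) (x 1)) (δ (x 0) z) (δ (x 1) z) :=
  ae_pi_ae_cons_of_ae_pi
    (hδ.ae_triple (ι := Fin 3) (i := 1) (j := 2) (k := 0) (by decide) (by decide) (by decide))

end IsBalancedTree

namespace IsAlternating

variable {δ : X → X → ℕ} {s : ℕ} {W : X → X → ℝ}

lemma ae_pair (hW : IsAlternating μ δ s W) {ι : Type*} [Fintype ι] {i j : ι} (hij : i ≠ j) :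
    ∀ᵐ x : ι → X ∂Measure.pi fun _ => μ,
      W (x i) (x j) = if Even (δ (x i) (x j) + s) then 1 else 0 := by
  have he : Function.Injective ![i, j] := by
    intro a b
    fin_cases a <;> fin_cases b <;> simp [hij, hij.symm]
  exact ae_pi_comp_of_ae_pi he hW

lemma ae_ae_eq (hW : IsAlternating μ δ s W) :
    ∀ᵐ x ∂μ, ∀ᵐ y ∂μ, W x y = if Even (δ x y + s) then 1 else 0 :=
  ae_ae_of_ae_pi_fin_two (P := fun x y => W x y = if Even (δ x y + s) then 1 else 0) hW

omit [IsProbabilityMeasure μ] in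
lemma compl (hW : IsAlternating μ δ s W) : IsAlternating μ δ (s + 1) fun x y => 1 - W x y := by
  filter_upwards [hW] with x hx
  simp only [hx, ← add_assoc, Nat.even_add_one]
  split_ifs <;> simp_all

lemma isPathFree (hW : IsAlternating μ δ s W) (hδ : IsBalancedTree μ δ) : IsPathFree μ W := by
  filter_upwards [hW.ae_pair (ι := Fin 4) (i := 0) (j := 1) (by decide),
    hW.ae_pair (ι := Fin 4) (i := 1) (j := 2) (by decide),
    hW.ae_pair (ι := Fin 4) (i := 2) (j := 3) (by decide),
    hW.ae_pair (ι := Fin 4) (i := 0) (j := 2) (by decide),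
    hW.ae_pair (ι := Fin 4) (i := 1) (j := 3) (by decide),
    hW.ae_pair (ι := Fin 4) (i := 0) (j := 3) (by decide),
    hδ.ae_triple (ι := Fin 4) (i := 0) (j := 1) (k := 2) (by decide) (by decide) (by decide),
    hδ.ae_triple (ι := Fin 4) (i := 0) (j := 1) (k := 3) (by decide) (by decide) (by decide),
    hδ.ae_triple (ι := Fin 4) (i := 0) (j := 2) (k := 3) (by decide) (by decide) (by decide),
    hδ.ae_triple (ι := Fin 4) (i := 1) (j := 2) (k := 3) (by decide) (by decide) (by decide)]
    with x h01 h12 h23 h02 h13 h03 t012 t013 t023 t123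
  rw [inducedPath, h01, h12, h23, h02, h13, h03]
  simp only [IsUltrametricTriple, Nat.even_iff] at t012 t013 t023 t123 ⊢
  by_contra hne
  simp only [mul_eq_zero, not_or, ite_eq_right_iff, one_ne_zero, imp_false, not_not, sub_eq_zero,
    left_eq_ite_iff] at hne
  omega

variable (hδ : IsBalancedTree μ δ) (hW : IsAlternating μ δ s W)
include hδ hW

/-- The points whose adjacency to `x` and `y` differs are those that branch off from the path to
`x`, or from the path to `y`, at an odd distance below the separation of `x` and `y`. -/
lemma ae_nbhdDist_eq : ∀ᵐ x : Fin 2 → X ∂Measure.pi fun _ => μ,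
    nbhdDist μ W (x 0) (x 1) = (1 / 2) ^ δ (x 0) (x 1) := by
  filter_upwards [ae_pi_apply_of_ae hW.ae_ae_eq 0,
    ae_pi_apply_of_ae hW.ae_ae_eq 1, hδ.ae_ae_triple,
    ae_pi_apply_of_ae hδ.geometric 0, ae_pi_apply_of_ae hδ.geometric 1] with x h0 h1 hult g0 g1
  have hterm : ∀ᵐ z ∂μ, distTerm (W (x 0) z) (W (x 1) z) = 3 / 2 *
      ((if δ (x 0) (x 1) + 1 ≤ δ (x 0) z ∧ Even (δ (x 0) z + (δ (x 0) (x 1) + 1)) then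
          1 ^ δ (x 0) z else 0) +
        if δ (x 0) (x 1) + 1 ≤ δ (x 1) z ∧ Even (δ (x 1) z + (δ (x 0) (x 1) + 1)) then
          1 ^ δ (x 1) z else 0) := by
    filter_upwards [h0, h1, hult] with z e0 e1 ⟨u1, u2, u3⟩
    simp only [distTerm, e0, e1, one_pow, Nat.even_iff]
    split_ifs <;> first | omega | norm_num
  have i0 := g0.integral_pow_of_even (hδ.measurable_right _) (δ (x 0) (x 1) + 1) zero_le_one le_rfl
  have i1 := g1.integral_pow_of_even (hδ.measurable_right _) (δ (x 0) (x 1) + 1) zero_le_one le_rfl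
  have hpos : ((1 : ℝ) / 2) ^ (δ (x 0) (x 1) + 1) / 2 / (1 - 1 ^ 2 / 4) ≠ 0 := by positivity
  rw [nbhdDist, integral_congr_ae hterm, integral_const_mul,
    integral_add (.of_integral_ne_zero (i0.trans_ne hpos))
      (.of_integral_ne_zero (i1.trans_ne hpos)), i0, i1]
  ring

lemma ae_ae_nbhdDist_eq : ∀ᵐ x ∂μ, ∀ᵐ y ∂μ, nbhdDist μ W x y = (1 / 2) ^ δ x y :=
  ae_ae_of_ae_pi_fin_two (P := fun x y => nbhdDist μ W x y = (1 / 2) ^ δ x y)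
    (ae_nbhdDist_eq hδ hW)

/-- If `x` and `y` are adjacent, the neighbors of `y` that are not neighbors of `x` are the points
that branch off from the path to `x` at an odd distance below the separation of `x` and `y`. -/
lemma hasDescendantMoment : HasDescendantMoment μ (2 / 15) W := by
  filter_upwards [hW, ae_pi_apply_of_ae hW.ae_ae_eq 0,
    ae_pi_apply_of_ae hW.ae_ae_eq 1, hδ.ae_ae_triple, ae_nbhdDist_eq hδ hW,
    ae_pi_apply_of_ae (ae_ae_nbhdDist_eq hδ hW) 0,
    ae_pi_apply_of_ae hδ.geometric 0] with x h01 h0 h1 hult hdist01 hdist g0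
  refine or_iff_not_imp_left.2 fun hne => ?_
  have hadj : Even (δ (x 0) (x 1) + s) := by
    by_contra hodd
    exact hne (h01.trans (if_neg hodd))
  have hterm : ∀ᵐ z ∂μ, (1 - W (x 0) z) * W (x 1) z * nbhdDist μ W (x 0) z =
      if δ (x 0) (x 1) + 1 ≤ δ (x 0) z ∧ Even (δ (x 0) z + (δ (x 0) (x 1) + 1)) then
        (1 / 2) ^ δ (x 0) z else 0 := by
    filter_upwards [h0, h1, hult, hdist] with z e0 e1 ⟨u1, u2, u3⟩ hz
    simp only [e0, e1, hz, Nat.even_iff] at hadj ⊢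
    split_ifs <;> first | omega | simp
  rw [integral_congr_ae hterm, g0.integral_pow_of_even (hδ.measurable_right _) _
    (by norm_num) (by norm_num), hdist01, pow_succ, ← pow_mul, mul_comm _ 2, pow_mul]
  norm_num
  ring

lemma hasConstDegree (hs : s ≤ 1) : HasConstDegree μ (2 / 3 * (1 / 2) ^ s) W := by
  filter_upwards [hW.ae_ae_eq, hδ.geometric] with x hx hgeom
  have hterm : ∀ᵐ z ∂μ, W x z = if s ≤ δ x z ∧ Even (δ x z + s) then 1 ^ δ x z else 0 := by
    filter_upwards [hx] with z hz
    simp only [hz, one_pow, Nat.even_iff]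
    congr 1
    grind
  rw [integral_congr_ae hterm, hgeom.integral_pow_of_even (hδ.measurable_right x) s zero_le_one
    le_rfl]
  ring

lemma hasNeighborMoment (hs : s ≤ 1) : HasNeighborMoment μ (8 / 15 * (1 / 4) ^ s) W := by
  filter_upwards [hW.ae_ae_eq, ae_ae_nbhdDist_eq hδ hW, hδ.geometric] with x hx hdist hgeom
  have hterm : ∀ᵐ z ∂μ, W x z * nbhdDist μ W x z =
      if s ≤ δ x z ∧ Even (δ x z + s) then (1 / 2) ^ δ x z else 0 := by
    filter_upwards [hx, hdist] with z hz hd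
    rw [hz, hd, ite_mul, one_mul, zero_mul]
    simp only [Nat.even_iff]
    congr 1
    grind
  rw [integral_congr_ae hterm, hgeom.integral_pow_of_even (hδ.measurable_right x) s (by norm_num)
    (by norm_num)]
  norm_num
  ring

end IsAlternating

end AlternatingTree

/-! ### The levels around a point -/

lemma setIntegral_sub_setIntegral_le {X : Type*} [MeasurableSpace X] {μ : Measure X}
    [IsFiniteMeasure μ] {f : X → ℝ} (hf : Integrable f μ) {S A : Set X} (hS : MeasurableSet S)
    (hA : MeasurableSet A) (hSA : ∀ᵐ z ∂μ, z ∈ S → z ∈ A) {c : ℝ}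
    (hc : ∀ᵐ z ∂μ, z ∈ A → z ∉ S → f z ≤ c) :
    ∫ z in A, f z ∂μ - ∫ z in S, f z ∂μ ≤ c * (μ.real A - μ.real S) := by
  have hint : Integrable (fun z => c - f z) μ := (integrable_const c).sub hf
  have hle : ∫ z in S, (c - f z) ∂μ ≤ ∫ z in A, (c - f z) ∂μ := by
    rw [← integral_indicator hS, ← integral_indicator hA]
    refine integral_mono_ae (hint.indicator hS) (hint.indicator hA) ?_
    filter_upwards [hSA, hc] with z hzSA hzc
    by_cases hzS : z ∈ S
    · simp [hzS, hzSA hzS]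
    · by_cases hzA : z ∈ A
      · simpa [hzS, hzA] using hzc hzA hzS
      · simp [hzS, hzA]
  have hsplit (T : Set X) : ∫ z in T, (c - f z) ∂μ = c * μ.real T - ∫ z in T, f z ∂μ := by
    rw [integral_sub (integrable_const c) hf.restrict, setIntegral_const, smul_eq_mul, mul_comm]
  rw [hsplit, hsplit] at hle
  linarith

/-- Up to the points with `ρ z = r`, the set `S` consists of the points of `Q` with `ρ z ≤ r`. Its
mass and first moment are those of the points of `Q` below a point at distance `r`, if `ρ` is the
distance from a fixed leaf of the alternating tree. -/
structure IsDescendantSet {X : Type*} [MeasurableSpace X] (μ : Measure X) (ρ : X → ℝ) (Q : Set X)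
    (r : ℝ) (S : Set X) : Prop where
  measurableSet : MeasurableSet S
  measureReal : μ.real S = r / 3
  integral : ∫ z in S, ρ z ∂μ = 2 / 15 * r ^ 2
  mem_and_le : ∀ᵐ z ∂μ, z ∈ S → z ∈ Q ∧ ρ z ≤ r
  le_of_notMem : ∀ᵐ z ∂μ, z ∈ Q → z ∉ S → r ≤ ρ z

/-- `P` and `Q` partition the space, up to null sets, and the points of each of them have
descendants in the other one, where `ρ` measures the distance from a fixed point. -/
structure HasDescendants {X : Type*} [MeasurableSpace X] (μ : Measure X) (ρ : X → ℝ)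
    (P Q : Set X) : Prop where
  boundedMeasurable : BoundedMeasurable ρ
  measurableSet_left : MeasurableSet P
  measurableSet_right : MeasurableSet Q
  mem_right_iff : ∀ᵐ y ∂μ, y ∈ Q ↔ y ∉ P
  left : ∀ᵐ y ∂μ, y ∈ P → ∃ S, IsDescendantSet μ ρ Q (ρ y) S
  right : ∀ᵐ y ∂μ, y ∈ Q → ∃ S, IsDescendantSet μ ρ P (ρ y) S

/-- The masses and first moments of the parts of `P` and of `Q` with `ρ z ≤ u` are those in the
alternating tree, where `u = 2⁻ᵈ` and `P` is the set containing the points at depth `d`. -/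
structure HasLevelMoments {X : Type*} [MeasurableSpace X] (μ : Measure X) (ρ : X → ℝ) (u : ℝ)
    (P Q : Set X) : Prop where
  measureReal_left : μ.real (P ∩ {z | ρ z ≤ u}) = 2 / 3 * u
  measureReal_right : μ.real (Q ∩ {z | ρ z ≤ u}) = 1 / 3 * u
  integral_left : ∫ z in P ∩ {z | ρ z ≤ u}, ρ z ∂μ = 8 / 15 * u ^ 2
  integral_right : ∫ z in Q ∩ {z | ρ z ≤ u}, ρ z ∂μ = 2 / 15 * u ^ 2

section Levels

variable {X : Type*} [MeasurableSpace X] {μ : Measure X} {ρ : X → ℝ} {P Q : Set X} {u : ℝ}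

namespace HasDescendants

lemma symm (h : HasDescendants μ ρ P Q) : HasDescendants μ ρ Q P where
  boundedMeasurable := h.boundedMeasurable
  measurableSet_left := h.measurableSet_right
  measurableSet_right := h.measurableSet_left
  mem_right_iff := h.mem_right_iff.mono fun _ hy => by rw [hy, not_not]
  left := h.right
  right := h.left

variable [IsProbabilityMeasure μ] (h : HasDescendants μ ρ P Q)
include h

omit [IsProbabilityMeasure μ] in
lemma measurableSet_inter_le (v : ℝ) : MeasurableSet (P ∩ {z | ρ z ≤ v}) :=
  h.measurableSet_left.inter (measurableSet_le h.boundedMeasurable.measurable measurable_const)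

variable (hu : 0 < u) (hL : HasLevelMoments μ ρ u P Q)
include hu hL

lemma ae_le_half_of_mem_right : ∀ᵐ z ∂μ, z ∈ Q → ρ z ≤ u → ρ z ≤ u / 2 := by
  filter_upwards [h.right] with z hz hzQ hzu
  obtain ⟨S, hS⟩ := hz hzQ
  have hcomp := setIntegral_sub_setIntegral_le (h.boundedMeasurable.integrable μ) hS.measurableSet
    (h.measurableSet_inter_le u) (hS.mem_and_le.mono fun w hw hwS =>
      ⟨(hw hwS).1, (hw hwS).2.trans hzu⟩) (ae_of_all μ fun w hw _ => hw.2)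
  rw [hL.measureReal_left, hL.integral_left, hS.measureReal, hS.integral] at hcomp
  by_contra! hc
  nlinarith [mul_pos (show 0 < 2 * u - ρ z by linarith) (sub_pos.2 hc)]

lemma ae_le_quarter_of_mem_left : ∀ᵐ y ∂μ, y ∈ P → ρ y < u → ρ y ≤ u / 4 := by
  filter_upwards [h.left] with y hy hyP hyu
  obtain ⟨S, hS⟩ := hy hyP
  have hcomp := setIntegral_sub_setIntegral_le (h.boundedMeasurable.integrable μ) hS.measurableSet
    (h.symm.measurableSet_inter_le u) (hS.mem_and_le.mono fun w hw hwS =>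
      ⟨(hw hwS).1, (hw hwS).2.trans hyu.le⟩)
    ((h.ae_le_half_of_mem_right hu hL).mono fun w hw hwB _ => hw hwB.1 hwB.2)
  rw [hL.measureReal_right, hL.integral_right, hS.measureReal, hS.integral] at hcomp
  by_contra! hc
  nlinarith [mul_pos (sub_pos.2 hyu) (sub_pos.2 hc)]

/-- The mean of `ρ` on the part of `Q` with `ρ z ≤ u` is `2 / 5 * u`, so `ρ` cannot be at most
`u / 4` there. -/
lemma exists_mem_right_quarter_lt :
    ∃ z ∈ Q, u / 4 < ρ z ∧ ρ z ≤ u / 2 ∧ ∃ S, IsDescendantSet μ ρ P (ρ z) S := by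
  by_contra! hcon
  have hle : ∀ᵐ z ∂μ, z ∈ Q ∩ {z | ρ z ≤ u} → ρ z ≤ u / 4 := by
    filter_upwards [h.ae_le_half_of_mem_right hu hL, h.right] with z hhalf hdesc hz
    by_contra! hquarter
    obtain ⟨S, hS⟩ := hdesc hz.1
    exact hcon z hz.1 hquarter (hhalf hz.1 hz.2) S hS
  have hcomp := setIntegral_sub_setIntegral_le (h.boundedMeasurable.integrable μ)
    MeasurableSet.empty (h.symm.measurableSet_inter_le u) (ae_of_all μ fun _ => False.elim)
    (hle.mono fun z hz hzB _ => hz hzB)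
  rw [hL.measureReal_right, hL.integral_right, setIntegral_empty, measureReal_empty] at hcomp
  nlinarith [mul_pos hu hu]

lemma exists_isDescendantSet_half : ∃ S, IsDescendantSet μ ρ P (u / 2) S := by
  obtain ⟨z, -, hquarter, hhalf, S, hS⟩ := h.exists_mem_right_quarter_lt hu hL
  suffices hz : ρ z = u / 2 from ⟨S, hz ▸ hS⟩
  have hcomp := setIntegral_sub_setIntegral_le (h.boundedMeasurable.integrable μ).neg
    hS.measurableSet (h.measurableSet_inter_le u) (hS.mem_and_le.mono fun w hw hwS =>
      ⟨(hw hwS).1, (hw hwS).2.trans (by linarith)⟩) (c := -u) (by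
    filter_upwards [h.ae_le_quarter_of_mem_left hu hL, hS.le_of_notMem] with w hw hge hwA hwS
    refine neg_le_neg (le_of_not_gt fun hlt => ?_)
    linarith [hw hwA.1 hlt, hge hwA.1 hwS])
  simp only [Pi.neg_apply, integral_neg] at hcomp
  rw [hL.measureReal_left, hL.integral_left, hS.measureReal, hS.integral] at hcomp
  by_contra hne
  have hlt := lt_of_le_of_ne hhalf hne
  nlinarith [mul_pos (show 0 < 2 * u - ρ z by linarith) (sub_pos.2 hlt)]

lemma hasLevelMoments_half : HasLevelMoments μ ρ (u / 2) Q P := by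
  obtain ⟨S, hS⟩ := h.exists_isDescendantSet_half hu hL
  have hP : (P ∩ {z | ρ z ≤ u / 2} : Set X) =ᵐ[μ] S := by
    filter_upwards [hS.mem_and_le, hS.le_of_notMem, h.ae_le_quarter_of_mem_left hu hL]
      with w hle hge hquarter
    refine propext ⟨fun hw => ?_, hle⟩
    by_contra hwS
    have hwu : ρ w ≤ u / 2 := hw.2
    linarith [hquarter hw.1 (by linarith), hge hw.1 hwS]
  have hQ : (Q ∩ {z | ρ z ≤ u / 2} : Set X) =ᵐ[μ] (Q ∩ {z | ρ z ≤ u} : Set X) := by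
    filter_upwards [h.ae_le_half_of_mem_right hu hL] with w hw
    exact propext (and_congr_right fun hwQ => ⟨fun hle => hle.trans (half_le_self hu.le), hw hwQ⟩)
  constructor
  · rw [measureReal_congr hQ, hL.measureReal_right]
    ring
  · rw [measureReal_congr hP, hS.measureReal]
    ring
  · rw [setIntegral_congr_set hQ, hL.integral_right]
    ring
  · rw [setIntegral_congr_set hP, hS.integral]

lemma ae_eq_or_le_half : ∀ᵐ y ∂μ, ρ y ≤ u → (y ∈ P ∧ ρ y = u) ∨ ρ y ≤ u / 2 := by
  filter_upwards [h.ae_le_half_of_mem_right hu hL, h.ae_le_quarter_of_mem_left hu hL,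
    h.mem_right_iff] with y hhalf hquarter hiff hyu
  by_cases hyP : y ∈ P
  · refine hyu.eq_or_lt.imp (⟨hyP, ·⟩) fun hlt => ?_
    linarith [hquarter hyP hlt]
  · exact Or.inr (hhalf (hiff.2 hyP) hyu)

omit hu in
lemma measureReal_le_eq : μ.real {y | ρ y ≤ u} = u := by
  have hQ : (Q ∩ {z | ρ z ≤ u} : Set X) =ᵐ[μ] ({z | ρ z ≤ u} \ P : Set X) := by
    filter_upwards [h.mem_right_iff] with y hy
    exact propext ((and_congr_left' hy).trans and_comm)
  rw [← measureReal_inter_add_sdiff (s := {y | ρ y ≤ u}) h.measurableSet_left,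
    ← measureReal_congr hQ, Set.inter_comm, hL.measureReal_left, hL.measureReal_right]
  ring

lemma measureReal_le_div_pow_eq (d : ℕ) : μ.real {y | ρ y ≤ u / 2 ^ d} = u / 2 ^ d := by
  induction d generalizing P Q u with
  | zero => simpa using h.measureReal_le_eq hL
  | succ d ih =>
    rw [pow_succ', ← div_div]
    exact ih h.symm (half_pos hu) (h.hasLevelMoments_half hu hL)

lemma ae_exists_eq_or_le_div_pow (d : ℕ) : ∀ᵐ y ∂μ, ρ y ≤ u →
    (∃ k : ℕ, ρ y = u / 2 ^ k ∧ (y ∈ P ↔ Even k)) ∨ ρ y ≤ u / 2 ^ d := by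
  induction d generalizing P Q u with
  | zero => exact ae_of_all μ fun y hy => Or.inr (by simpa using hy)
  | succ d ih =>
    filter_upwards [ih h.symm (half_pos hu) (h.hasLevelMoments_half hu hL),
      h.ae_eq_or_le_half hu hL, h.mem_right_iff] with y hrec hstep hiff hyu
    rcases hstep hyu with ⟨hyP, hy⟩ | hhalf
    · exact Or.inl ⟨0, by simpa using hy, by simpa using hyP⟩
    · rw [pow_succ', ← div_div]
      refine (hrec hhalf).imp_left ?_
      rintro ⟨k, hk, hkQ⟩
      refine ⟨k + 1, by rw [hk, pow_succ', div_div], ?_⟩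
      rw [Nat.even_add_one, ← hkQ, hiff, not_not]

lemma ae_exists_eq_div_pow :
    ∀ᵐ y ∂μ, ρ y ≤ u → ∃ k : ℕ, ρ y = u / 2 ^ k ∧ (y ∈ P ↔ Even k) := by
  have hlim : Filter.Tendsto (fun d : ℕ => u / 2 ^ d) Filter.atTop (nhds 0) :=
    tendsto_const_nhds.div_atTop (tendsto_pow_atTop_atTop_of_one_lt one_lt_two)
  have hnull : μ.real {y | ∀ d : ℕ, ρ y ≤ u / 2 ^ d} = 0 := by
    refine le_antisymm (ge_of_tendsto' hlim fun d => ?_) measureReal_nonneg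
    rw [← h.measureReal_le_div_pow_eq hu hL d]
    exact measureReal_mono fun y hy => hy d
  have hae : ∀ᵐ y ∂μ, ¬ ∀ d : ℕ, ρ y ≤ u / 2 ^ d := by
    rw [measureReal_eq_zero_iff] at hnull
    simpa only [ae_iff, not_not] using hnull
  filter_upwards [ae_all_iff.2 (h.ae_exists_eq_or_le_div_pow hu hL), hae] with y hy hyd hyu
  obtain ⟨d, hd⟩ := not_forall.1 hyd
  exact (hy d hyu).resolve_right hd

end HasDescendants

end Levels

/-! ### Recovering the tree around a point -/

/-- The degree and moment conditions that hold for an alternating tree kernel which contains the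
pairs of leaves separating at the depths `s, s + 2, s + 4, …`, where `s` is `0` or `1`. -/
structure HasTreeMoments {X : Type*} [MeasurableSpace X] (μ : Measure X) (s : ℕ)
    (W : X → X → ℝ) : Prop where
  degree : HasConstDegree μ (2 / 3 * (1 / 2) ^ s) W
  neighbor : HasNeighborMoment μ (8 / 15 * (1 / 4) ^ s) W
  descendant : HasDescendantMoment μ (2 / 15) W

/-- The conditions, each expressible by finitely many densities, that force a graphon to be an
alternating tree kernel. -/
structure IsTreelike {X : Type*} [MeasurableSpace X] (μ : Measure X) (W : X → X → ℝ) : Prop where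
  pathFree : IsPathFree μ W
  moments : HasTreeMoments μ 0 W
  moments_compl : HasTreeMoments μ 1 fun x y => 1 - W x y

/-- A neighbor `b` of `a` is at least as far from `a` as the neighbors of `b` that are not neighbors
of `a`. -/
def IsNested {X : Type*} [MeasurableSpace X] (μ : Measure X) (W : X → X → ℝ) : Prop :=
  ∀ᵐ x : Fin 3 → X ∂Measure.pi fun _ => μ, W (x 0) (x 1) = 1 → W (x 0) (x 2) = 0 →
    W (x 1) (x 2) = 1 → nbhdDist μ W (x 0) (x 2) ≤ nbhdDist μ W (x 0) (x 1)

section Forcing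

variable {X Y : Type*} [MeasurableSpace X] [MeasurableSpace Y] {μ : Measure X}
  [IsProbabilityMeasure μ] {ν : Measure Y} [IsProbabilityMeasure ν] {W : X → X → ℝ}
  {V : Y → Y → ℝ}

lemma IsAlternating.hasTreeMoments {δ : X → X → ℕ} {s : ℕ} (hW : IsAlternating μ δ s W)
    (hδ : IsBalancedTree μ δ) (hs : s ≤ 1) : HasTreeMoments μ s W :=
  ⟨hasConstDegree hδ hW hs, hasNeighborMoment hδ hW hs, hasDescendantMoment hδ hW⟩

lemma IsAlternating.isTreelike {δ : X → X → ℕ} (hW : IsAlternating μ δ 0 W)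
    (hδ : IsBalancedTree μ δ) : IsTreelike μ W :=
  ⟨hW.isPathFree hδ, hW.hasTreeMoments hδ zero_le_one, hW.compl.hasTreeMoments hδ le_rfl⟩

lemma SameDensities.hasTreeMoments (h : ∀ n ≤ 6, SameDensities n μ W ν V) (hW : IsGraphon W)
    (hV : IsGraphon V) {s : ℕ} (hmom : HasTreeMoments ν s V) : HasTreeMoments μ s W where
  degree := (h 3 (by norm_num)).hasConstDegree hW hV hmom.degree
  neighbor := (h 5 (by norm_num)).hasNeighborMoment hW hV hmom.neighbor
  descendant := (h 6 le_rfl).hasDescendantMoment hW hV hmom.descendant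

lemma SameDensities.isTreelike (h : ∀ n ≤ 6, SameDensities n μ W ν V) (hW : IsGraphon W)
    (hV : IsGraphon V) (htree : IsTreelike ν V) : IsTreelike μ W where
  pathFree := (h 4 (by norm_num)).isPathFree hW hV htree.pathFree
  moments := hasTreeMoments h hW hV htree.moments
  moments_compl := hasTreeMoments (fun n hn => (h n hn).compl hW hV) hW.compl hV.compl
    htree.moments_compl

omit [IsProbabilityMeasure μ] in
lemma integral_mul_eq_setIntegral {f g : X → ℝ} (hf : Measurable f)
    (h01 : ∀ᵐ z ∂μ, f z = 0 ∨ f z = 1) : ∫ z, f z * g z ∂μ = ∫ z in {z | f z = 1}, g z ∂μ := by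
  rw [← integral_indicator (measurableSet_eq_fun hf measurable_const)]
  refine integral_congr_ae (h01.mono fun z hz => ?_)
  rcases hz with hz | hz <;> simp [hz]

omit [IsProbabilityMeasure μ] in
lemma integral_eq_measureReal_of_zero_or_one {f : X → ℝ} (hf : Measurable f)
    (h01 : ∀ᵐ z ∂μ, f z = 0 ∨ f z = 1) : ∫ z, f z ∂μ = μ.real {z | f z = 1} := by
  simpa using integral_mul_eq_setIntegral (g := fun _ => 1) hf h01

namespace IsPathFree

variable {p : ℝ} (hfree : IsPathFree μ W) (hW : IsGraphon W) (hdeg : HasConstDegree μ p W)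
include hfree hW hdeg

/-- The paths `a, c, d, b` and `c, a, b, d` are induced if `c` is a neighbor of `a` only and `d` one
of `b` only, up to the adjacency of `a` and `b` and of `c` and `d`. If `W a b` is neither `0` nor
`1`, one of them has a positive weight. -/
lemma ae_ae_nbhdDist_eq_zero_or :
    ∀ᵐ a ∂μ, ∀ᵐ b ∂μ, nbhdDist μ W a b = 0 ∨ W a b = 0 ∨ W a b = 1 := by
  have hpaths : ∀ᵐ x : Fin 4 → X ∂Measure.pi fun _ => μ,
      inducedPath W (x 0) (x 2) (x 3) (x 1) = 0 ∧ inducedPath W (x 2) (x 0) (x 1) (x 3) = 0 :=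
    (ae_pi_comp_of_ae_pi (e := ![(0 : Fin 4), 2, 3, 1]) (by decide) hfree).and
      (ae_pi_comp_of_ae_pi (e := ![(2 : Fin 4), 0, 1, 3]) (by decide) hfree)
  filter_upwards [ae_ae_cons_of_ae_pi hpaths, hdeg] with a ha hdega
  filter_upwards [ae_ae_cons_of_ae_pi ha, hdeg] with b hb hdegb
  have hab := hW.integral_compl_mul_eq_of_degree_eq (hdega.trans hdegb.symm)
  have hba := hW.integral_compl_mul_eq_of_degree_eq (hdegb.trans hdega.symm)
  refine or_iff_not_imp_right.2 fun hcon => ?_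
  obtain ⟨hne0, hne1⟩ := not_or.1 hcon
  have hzero : ∀ᵐ c ∂μ, ∀ᵐ d ∂μ, (1 - W b c) * W a c * ((1 - W a d) * W b d) = 0 := by
    refine ae_ae_of_ae_pi_fin_two
      (P := fun c d => (1 - W b c) * W a c * ((1 - W a d) * W b d) = 0) (hb.mono ?_)
    rintro x ⟨hacdb, hcabd⟩
    change inducedPath W a (x 0) (x 1) b = 0 at hacdb
    change inducedPath W (x 0) a b (x 1) = 0 at hcabd
    refine (mul_eq_zero.1 (?_ : W a b * (1 - W a b) * _ = 0)).resolve_left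
      (mul_ne_zero hne0 (sub_ne_zero.2 (Ne.symm hne1)))
    simp only [inducedPath, hW.symm (x 0) a, hW.symm (x 0) b, hW.symm (x 1) b] at hacdb hcabd
    linear_combination W a b * hacdb + (1 - W a b) * hcabd
  have hdist : ∀ᵐ c ∂μ, (1 - W b c) * W a c * (nbhdDist μ W a b / 3) = 0 := by
    filter_upwards [hzero] with c hc
    rw [← hab, ← integral_const_mul]
    exact integral_eq_zero_of_ae hc
  have hsq := integral_eq_zero_of_ae hdist
  rw [integral_mul_const, hba, nbhdDist_comm] at hsq
  simpa using hsq

lemma ae_ae_eq_zero_or_one : ∀ᵐ x ∂μ, ∀ᵐ y ∂μ, W x y = 0 ∨ W x y = 1 := by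
  filter_upwards [hfree.ae_ae_nbhdDist_eq_zero_or hW hdeg] with x hx
  by_cases hne : ∀ᵐ y ∂μ, nbhdDist μ W x y ≠ 0
  · filter_upwards [hx, hne] with y hy hney using hy.resolve_left hney
  · obtain ⟨y, hy⟩ := (Filter.not_eventually.1 hne).exists
    have hterm := (hW.boundedMeasurable_distTerm_right x y).ae_eq_zero_of_integral_eq_zero
      (fun z => distTerm_nonneg (hW.mem_Icc x z) (hW.mem_Icc y z)) (not_not.1 hy)
    filter_upwards [hterm] with z hz
    have h1 := mul_nonneg (hW.nonneg x z) (hW.compl.nonneg y z)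
    have h2 := mul_nonneg (hW.compl.nonneg x z) (hW.nonneg y z)
    rw [distTerm] at hz
    have hxy : W x z = W y z := by linarith
    rw [← hxy] at hz
    refine (mul_eq_zero.1 (?_ : W x z * (1 - W x z) = 0)).imp_right fun h => (sub_eq_zero.1 h).symm
    linarith

/-- If `a, b, c, d` is never an induced path, the neighbors `d` of `c` outside the neighborhood of
`a` are neighbors of `b`. -/
lemma isNested : IsNested μ W := by
  have hfree' := ae_pi_ae_cons_of_ae_pi
    (ae_pi_comp_of_ae_pi (e := ![(1 : Fin 4), 2, 3, 0]) (by decide) hfree)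
  filter_upwards [hfree', ae_pi_apply_of_ae hdeg 0, ae_pi_apply_of_ae hdeg 1,
    ae_pi_apply_of_ae hdeg 2] with x hx h0 h1 h2 h01 h02 h12
  rw [← div_le_div_iff_of_pos_right three_pos,
    ← hW.integral_compl_mul_eq_of_degree_eq (h0.trans h2.symm),
    ← hW.integral_compl_mul_eq_of_degree_eq (h0.trans h1.symm)]
  have hbm (y z : X) := (hW.compl.boundedMeasurable_right y).mul (hW.boundedMeasurable_right z)
  refine integral_mono_ae ((hbm _ _).integrable μ) ((hbm _ _).integrable μ) (hx.mono fun z hz => ?_)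
  change inducedPath W (x 0) (x 1) (x 2) z = 0 at hz
  simp only [inducedPath, h01, h02, h12, one_mul, sub_zero, mul_one] at hz
  have hle : (1 - W (x 0) z) * W (x 1) z * W (x 2) z ≤ (1 - W (x 0) z) * W (x 1) z :=
    mul_le_of_le_one_right (mul_nonneg (hW.compl.nonneg _ _) (hW.nonneg _ _)) (hW.le_one _ _)
  calc (1 - W (x 0) z) * W (x 2) z = (1 - W (x 0) z) * W (x 1) z * W (x 2) z := by
        linear_combination hz
    _ ≤ (1 - W (x 0) z) * W (x 1) z := hle

end IsPathFree

namespace HasTreeMoments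

variable {s : ℕ} (hmom : HasTreeMoments μ s W) (hW : IsGraphon W)
include hmom hW

lemma ae_exists_isDescendantSet (h01 : ∀ᵐ x ∂μ, ∀ᵐ y ∂μ, W x y = 0 ∨ W x y = 1)
    (hnest : IsNested μ W) (hnest' : IsNested μ fun x y => 1 - W x y) :
    ∀ᵐ x ∂μ, ∀ᵐ y ∂μ, W x y = 1 →
      ∃ S, IsDescendantSet μ (nbhdDist μ W x) {z | W x z = 0} (nbhdDist μ W x y) S := by
  have hle := ae_ae_ae_of_ae_pi_fin_three (P := fun x y z => W x y = 1 → W x z = 0 → W y z = 1 →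
    nbhdDist μ W x z ≤ nbhdDist μ W x y) hnest
  have hge := ae_ae_ae_of_ae_pi_fin_three (P := fun x y z => 1 - W x z = 1 → 1 - W x y = 0 →
    1 - W z y = 1 → nbhdDist μ (fun x y => 1 - W x y) x y ≤ nbhdDist μ (fun x y => 1 - W x y) x z)
    (ae_pi_comp_of_ae_pi (e := ![(0 : Fin 3), 2, 1]) (by decide) hnest')
  have hdesc := ae_ae_of_ae_pi_fin_two (P := fun x y => W x y = 0 ∨
    ∫ z, (1 - W x z) * W y z * nbhdDist μ W x z ∂μ = 2 / 15 * nbhdDist μ W x y ^ 2) hmom.descendant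
  rw [nbhdDist_compl] at hge
  filter_upwards [h01, hle, hge, hdesc, hmom.degree] with x hx01 hxle hxge hxdesc hxdeg
  filter_upwards [h01, hxle, hxge, hxdesc, hmom.degree] with y hy01 hyle hyge hydesc hydeg hxy
  have hmeas := ((hW.compl.boundedMeasurable_right x).mul (hW.boundedMeasurable_right y)).measurable
  have hS01 : ∀ᵐ z ∂μ, (1 - W x z) * W y z = 0 ∨ (1 - W x z) * W y z = 1 := by
    filter_upwards [hx01, hy01] with z hxz hyz
    rcases hxz with hxz | hxz <;> rcases hyz with hyz | hyz <;> simp [hxz, hyz]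
  refine ⟨{z | (1 - W x z) * W y z = 1}, measurableSet_eq_fun hmeas measurable_const, ?_, ?_, ?_,
    ?_⟩
  · rw [← integral_eq_measureReal_of_zero_or_one hmeas hS01,
      hW.integral_compl_mul_eq_of_degree_eq (hxdeg.trans hydeg.symm)]
  · rw [← integral_mul_eq_setIntegral hmeas hS01]
    exact hydesc.resolve_left (by rw [hxy]; exact one_ne_zero)
  · filter_upwards [hx01, hy01, hyle] with z hxz hyz hle hz
    rcases hxz with hxz | hxz <;> rcases hyz with hyz | hyz <;> simp_all
  · filter_upwards [hy01, hyge] with z hyz hge hxz hz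
    rcases hyz with hyz | hyz <;> simp_all [hW.symm z y]

end HasTreeMoments

namespace IsTreelike

variable (hT : IsTreelike μ W) (hW : IsGraphon W)
include hT hW

lemma ae_ae_eq_zero_or_one : ∀ᵐ x ∂μ, ∀ᵐ y ∂μ, W x y = 0 ∨ W x y = 1 :=
  hT.pathFree.ae_ae_eq_zero_or_one hW hT.moments.degree

lemma isNested : IsNested μ W := hT.pathFree.isNested hW hT.moments.degree

lemma isNested_compl : IsNested μ fun x y => 1 - W x y :=
  (hT.pathFree.compl hW.symm).isNested hW.compl hT.moments_compl.degree

lemma ae_hasDescendants :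
    ∀ᵐ x ∂μ, HasDescendants μ (nbhdDist μ W x) {z | W x z = 1} {z | W x z = 0} := by
  have h01 : ∀ᵐ x ∂μ, ∀ᵐ y ∂μ, 1 - W x y = 0 ∨ 1 - W x y = 1 := by
    filter_upwards [hT.ae_ae_eq_zero_or_one hW] with x hx
    filter_upwards [hx] with y hy
    rcases hy with hy | hy <;> simp [hy]
  have hself : IsNested μ fun x y => 1 - (1 - W x y) := by
    simpa only [sub_sub_cancel] using hT.isNested hW
  have hright :=
    hT.moments_compl.ae_exists_isDescendantSet hW.compl h01 (hT.isNested_compl hW) hself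
  simp only [nbhdDist_compl, sub_eq_zero, eq_comm (a := (1 : ℝ)), sub_eq_self] at hright
  filter_upwards [hT.moments.ae_exists_isDescendantSet hW (hT.ae_ae_eq_zero_or_one hW)
    (hT.isNested hW) (hT.isNested_compl hW), hright, hT.ae_ae_eq_zero_or_one hW]
    with x hleft hright hx01
  have hmeas := (hW.boundedMeasurable_right x).measurable
  refine ⟨hW.boundedMeasurable_nbhdDist_right x, measurableSet_eq_fun hmeas measurable_const,
    measurableSet_eq_fun hmeas measurable_const, ?_, hleft, hright⟩
  filter_upwards [hx01] with z hz
  rcases hz with hz | hz <;> simp [hz]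

lemma ae_ae_nbhdDist_le_one : ∀ᵐ x ∂μ, ∀ᵐ y ∂μ, nbhdDist μ W x y ≤ 1 := by
  filter_upwards [hT.moments.degree, hT.moments_compl.degree] with x hx hx'
  filter_upwards [hT.moments.degree] with y hy
  have hxc := hW.compl.boundedMeasurable_right x
  have hle : ∫ z, (1 - W x z) * W y z ∂μ ≤ ∫ z, (1 - W x z) ∂μ :=
    integral_mono ((hxc.mul (hW.boundedMeasurable_right y)).integrable μ) (hxc.integrable μ)
      fun z => mul_le_of_le_one_right (hW.compl.nonneg x z) (hW.le_one y z)
  rw [hW.integral_compl_mul_eq_of_degree_eq (hx.trans hy.symm), hx'] at hle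
  linarith

lemma ae_hasLevelMoments :
    ∀ᵐ x ∂μ, HasLevelMoments μ (nbhdDist μ W x) 1 {z | W x z = 1} {z | W x z = 0} := by
  filter_upwards [hT.ae_ae_eq_zero_or_one hW, hT.ae_ae_nbhdDist_le_one hW, hT.moments.degree,
    hT.moments.neighbor, hT.moments_compl.degree, hT.moments_compl.neighbor]
    with x h01 hle hdeg hnbr hdeg' hnbr'
  have hlevel (A : Set X) : (A ∩ {z | nbhdDist μ W x z ≤ 1} : Set X) =ᵐ[μ] A := by
    filter_upwards [hle] with z hz
    exact propext (and_iff_left hz)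
  have h01' : ∀ᵐ z ∂μ, 1 - W x z = 0 ∨ 1 - W x z = 1 := by
    filter_upwards [h01] with z hz
    rcases hz with hz | hz <;> simp [hz]
  have hmeas := (hW.boundedMeasurable_right x).measurable
  have hmeas' := (hW.compl.boundedMeasurable_right x).measurable
  rw [integral_eq_measureReal_of_zero_or_one hmeas h01] at hdeg
  rw [integral_mul_eq_setIntegral hmeas h01] at hnbr
  rw [integral_eq_measureReal_of_zero_or_one hmeas' h01'] at hdeg'
  rw [nbhdDist_compl, integral_mul_eq_setIntegral hmeas' h01'] at hnbr'
  simp only [sub_eq_self] at hdeg' hnbr'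
  constructor
  · rw [measureReal_congr (hlevel _), hdeg]
    norm_num
  · rw [measureReal_congr (hlevel _), hdeg']
    norm_num
  · rw [setIntegral_congr_set (hlevel _), hnbr]
    norm_num
  · rw [setIntegral_congr_set (hlevel _), hnbr']
    norm_num

lemma ae_measureReal_nbhdDist_le_eq :
    ∀ᵐ x ∂μ, ∀ d : ℕ, μ.real {y | nbhdDist μ W x y ≤ (1 / 2) ^ d} = (1 / 2) ^ d := by
  filter_upwards [hT.ae_hasDescendants hW, hT.ae_hasLevelMoments hW] with x hdesc hlevel d
  simpa only [one_div_pow] using hdesc.measureReal_le_div_pow_eq one_pos hlevel d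

lemma ae_ae_exists_nbhdDist_eq : ∀ᵐ x ∂μ, ∀ᵐ y ∂μ, ∃ d : ℕ,
    nbhdDist μ W x y = (1 / 2) ^ d ∧ W x y = if Even d then 1 else 0 := by
  filter_upwards [hT.ae_hasDescendants hW, hT.ae_hasLevelMoments hW,
    hT.ae_ae_nbhdDist_le_one hW, hT.ae_ae_eq_zero_or_one hW] with x hdesc hlevel hle h01
  filter_upwards [hdesc.ae_exists_eq_div_pow one_pos hlevel, hle, h01] with y hy hyle hy01
  obtain ⟨d, hd, hiff⟩ := hy hyle
  refine ⟨d, by rw [hd, one_div_pow], ?_⟩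
  split_ifs with heven
  · exact hiff.2 heven
  · exact hy01.resolve_right fun h => heven (hiff.1 h)

end IsTreelike

end Forcing

/-! ### The recovered tree -/

/-- The depth at which `x` and `y` separate, recovered from the distance of their neighborhoods. -/
def separationDepth {X : Type*} [MeasurableSpace X] (μ : Measure X) (W : X → X → ℝ) (x y : X) : ℕ :=
  ⌊-Real.logb 2 (nbhdDist μ W x y)⌋₊

lemma eq_add_one_of_half_pow_le_add {p q r : ℕ} (h : (1 / 2 : ℝ) ^ p ≤ (1 / 2) ^ q + (1 / 2) ^ r)
    (hq : p < q) (hr : p < r) : q = p + 1 := by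
  have hanti {a b : ℕ} (hab : a ≤ b) : (1 / 2 : ℝ) ^ b ≤ (1 / 2) ^ a :=
    pow_le_pow_of_le_one (by norm_num) (by norm_num) hab
  by_contra hne
  have hq2 := hanti (show p + 2 ≤ q by omega)
  have hr1 := hanti (Nat.succ_le_of_lt hr)
  have hpos : (0 : ℝ) < (1 / 2) ^ p := by positivity
  rw [pow_succ] at hr1
  rw [pow_add] at hq2
  linarith

section Recovery

variable {X : Type*} [MeasurableSpace X] {μ : Measure X} {W : X → X → ℝ}

lemma separationDepth_comm (x y : X) : separationDepth μ W x y = separationDepth μ W y x := by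
  rw [separationDepth, separationDepth, nbhdDist_comm]

lemma separationDepth_eq {x y : X} {d : ℕ} (h : nbhdDist μ W x y = (1 / 2) ^ d) :
    separationDepth μ W x y = d := by
  rw [separationDepth, h, Real.logb_pow, one_div, Real.logb_inv, Real.logb_self_eq_one one_lt_two]
  simp

variable [IsProbabilityMeasure μ]

lemma IsGraphon.measurable_separationDepth (hW : IsGraphon W) :
    Measurable (Function.uncurry (separationDepth μ W)) :=
  Nat.measurable_floor.comp
    (((Real.measurable_log.comp hW.boundedMeasurable_nbhdDist.measurable).div_const _).neg)

namespace IsTreelike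

variable (hT : IsTreelike μ W) (hW : IsGraphon W)
include hT hW

lemma ae_ae_nbhdDist_eq_pow_separationDepth : ∀ᵐ x ∂μ, ∀ᵐ y ∂μ,
    nbhdDist μ W x y = (1 / 2) ^ separationDepth μ W x y ∧
      W x y = if Even (separationDepth μ W x y) then 1 else 0 := by
  filter_upwards [hT.ae_ae_exists_nbhdDist_eq hW] with x hx
  filter_upwards [hx] with y ⟨d, hd, hpar⟩
  rw [separationDepth_eq hd]
  exact ⟨hd, hpar⟩

lemma ae_pair_nbhdDist_eq_pow_separationDepth {ι : Type*} [Fintype ι] {i j : ι} (hij : i ≠ j) :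
    ∀ᵐ x : ι → X ∂Measure.pi fun _ => μ,
      nbhdDist μ W (x i) (x j) = (1 / 2) ^ separationDepth μ W (x i) (x j) ∧
        W (x i) (x j) = if Even (separationDepth μ W (x i) (x j)) then 1 else 0 := by
  refine ae_pi_pair_of_ae_ae (P := fun x y => nbhdDist μ W x y = (1 / 2) ^ separationDepth μ W x y ∧
    W x y = if Even (separationDepth μ W x y) then 1 else 0)
    (MeasurableSet.inter (measurableSet_eq_fun hW.boundedMeasurable_nbhdDist.measurable ?_)
      (measurableSet_eq_fun hW.measurable ?_)) (hT.ae_ae_nbhdDist_eq_pow_separationDepth hW) hij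
  · exact (measurable_of_countable fun d : ℕ => (1 / 2 : ℝ) ^ d).comp hW.measurable_separationDepth
  · exact (measurable_of_countable fun d : ℕ => if Even d then (1 : ℝ) else 0).comp
      hW.measurable_separationDepth

lemma isAlternating : IsAlternating μ (separationDepth μ W) 0 W :=
  (hT.ae_pair_nbhdDist_eq_pow_separationDepth hW (Fin.zero_ne_one (n := 0))).mono fun _ hx => hx.2

lemma ae_hasGeometricTail : ∀ᵐ x ∂μ, HasGeometricTail μ (separationDepth μ W x) := by
  filter_upwards [hT.ae_measureReal_nbhdDist_le_eq hW, hT.ae_ae_nbhdDist_eq_pow_separationDepth hW]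
    with x hx hdist d
  rw [← hx d]
  refine measureReal_congr (hdist.mono fun y hy => propext ?_)
  change d ≤ separationDepth μ W x y ↔ nbhdDist μ W x y ≤ (1 / 2) ^ d
  rw [hy.1, pow_le_pow_iff_right_of_lt_one₀ (by norm_num) (by norm_num)]

/-- By the triangle inequality, `0` and `2` can only separate above `1` at the depth `p` if both of
them separate from `1` at the depth `p + 1`. Then `0` and `2` have the parity opposite to the one of
the two other pairs, and nestedness, of `W` or of its complement, is violated. -/
lemma ae_min_separationDepth_le : ∀ᵐ x : Fin 3 → X ∂Measure.pi fun _ => μ,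
    min (separationDepth μ W (x 0) (x 1)) (separationDepth μ W (x 1) (x 2)) ≤
      separationDepth μ W (x 0) (x 2) := by
  filter_upwards [
    hT.ae_pair_nbhdDist_eq_pow_separationDepth (ι := Fin 3) hW (i := 0) (j := 1) (by decide),
    hT.ae_pair_nbhdDist_eq_pow_separationDepth (ι := Fin 3) hW (i := 0) (j := 2) (by decide),
    hT.ae_pair_nbhdDist_eq_pow_separationDepth (ι := Fin 3) hW (i := 1) (j := 2) (by decide),
    hT.isNested hW, hT.isNested_compl hW] with x h01 h02 h12 hnest hnest'
  obtain ⟨d01, w01⟩ := h01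
  obtain ⟨d02, w02⟩ := h02
  obtain ⟨d12, w12⟩ := h12
  rw [nbhdDist_compl] at hnest'
  by_contra! hlt
  obtain ⟨hlt01, hlt12⟩ := lt_min_iff.1 hlt
  have htri := hW.nbhdDist_triangle (μ := μ) (x 0) (x 1) (x 2)
  rw [d01, d02, d12] at htri
  have h01 := eq_add_one_of_half_pow_le_add htri hlt01 hlt12
  have h12 := eq_add_one_of_half_pow_le_add (htri.trans_eq (add_comm _ _)) hlt12 hlt01
  have hle : nbhdDist μ W (x 0) (x 2) ≤ nbhdDist μ W (x 0) (x 1) := by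
    simp only [h01, Nat.even_add_one] at w01
    simp only [h12, Nat.even_add_one] at w12
    by_cases heven : Even (separationDepth μ W (x 0) (x 2))
    · exact hnest' (by simp [w01, heven]) (by simp [w02, heven]) (by simp [w12, heven])
    · exact hnest (by simp [w01, heven]) (by simp [w02, heven]) (by simp [w12, heven])
  rw [d01, d02, h01, pow_succ] at hle
  have hpos : (0 : ℝ) < (1 / 2) ^ separationDepth μ W (x 0) (x 2) := by positivity
  linarith

lemma isBalancedTree : IsBalancedTree μ (separationDepth μ W) where
  measurable := hW.measurable_separationDepth
  symm := separationDepth_comm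
  geometric := hT.ae_hasGeometricTail hW
  ultrametric := by
    have hperm {e : Fin 3 → Fin 3} (he : e.Injective) :=
      ae_pi_comp_of_ae_pi he (hT.ae_min_separationDepth_le hW)
    filter_upwards [hperm (e := ![1, 0, 2]) (by decide), hperm (e := ![0, 2, 1]) (by decide),
      hperm (e := ![0, 1, 2]) (by decide)] with x h102 h021 h012
    simp only [Matrix.cons_val] at h102 h021 h012
    rw [separationDepth_comm (x 1) (x 0)] at h102
    rw [separationDepth_comm (x 2) (x 1)] at h021
    exact ⟨h102, h021, h012⟩

end IsTreelike

end Recovery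

/-! ### The joint law of the separation depths -/

/-- The configurations whose separation depths are bounded below by the entries of `m` above the
diagonal. -/
def depthOrthant {X : Type*} (δ : X → X → ℕ) {n : ℕ} (m : Fin n → Fin n → ℕ) : Set (Fin n → X) :=
  {x | ∀ i j, i < j → m i j ≤ δ (x i) (x j)}

/-- The bounds for the separation depths of the last `n` of `n + 1` points that follow, by the
ultrametric inequality through the first point, from the bounds `m` for all of them. -/
def reducedBounds {n : ℕ} (m : Fin (n + 1) → Fin (n + 1) → ℕ) : Fin n → Fin n → ℕ :=
  fun i j => max (m i.succ j.succ) (min (m 0 i.succ) (m 0 j.succ))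

/-- The separation depths of all pairs of entries of a tuple. -/
def pairDepths {X : Type*} (δ : X → X → ℕ) {n : ℕ} (x : Fin n → X) :
    {p : Fin n × Fin n // p.1 < p.2} → ℕ :=
  fun p => δ (x p.1.1) (x p.1.2)

lemma generateFrom_range_Ici_pi_nat (ι : Type*) [Finite ι] :
    MeasurableSpace.generateFrom (Set.range (Set.Ici : (ι → ℕ) → Set (ι → ℕ))) =
      MeasurableSpace.pi := by
  have hspan : IsCountablySpanning (Set.range (Set.Ici : ℕ → Set ℕ)) :=
    ⟨fun _ => Set.Ici 0, fun _ => ⟨0, rfl⟩, Set.iUnion_eq_univ_iff.2 fun d => ⟨0, Nat.zero_le d⟩⟩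
  rw [← generateFrom_eq_pi (fun _ : ι => (borel_eq_generateFrom_Ici ℕ).symm.trans
    (BorelSpace.measurable_eq (α := ℕ)).symm) fun _ => hspan]
  congr 1
  ext t
  simp only [Set.mem_range, Set.mem_image, Set.mem_univ_pi]
  constructor
  · rintro ⟨d, rfl⟩
    exact ⟨fun i => Set.Ici (d i), fun i => ⟨d i, rfl⟩, Set.pi_univ_Ici d⟩
  · rintro ⟨u, hu, rfl⟩
    choose d hd using hu
    exact ⟨d, by rw [← Set.pi_univ_Ici, funext hd]⟩

lemma ext_of_measureReal_Ici {ι : Type*} [Finite ι] {κ κ' : Measure (ι → ℕ)}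
    [IsProbabilityMeasure κ] [IsProbabilityMeasure κ']
    (h : ∀ d, κ.real (Set.Ici d) = κ'.real (Set.Ici d)) : κ = κ' := by
  refine ext_of_generate_finite _ (generateFrom_range_Ici_pi_nat ι).symm ?_ ?_
    (by simp only [measure_univ])
  · rintro _ ⟨a, rfl⟩ _ ⟨b, rfl⟩ _
    exact ⟨a ⊔ b, Set.Ici_inter_Ici.symm⟩
  · rintro _ ⟨d, rfl⟩
    exact (measureReal_eq_measureReal_iff).1 (h d)

section DepthLaw

variable {X : Type*} {δ : X → X → ℕ} {n : ℕ}

lemma cons_mem_depthOrthant_iff {m : Fin (n + 1) → Fin (n + 1) → ℕ} {z : X} {x : Fin n → X} :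
    (Fin.cons z x : Fin (n + 1) → X) ∈ depthOrthant δ m ↔
      (∀ j, m 0 j.succ ≤ δ z (x j)) ∧ x ∈ depthOrthant δ fun i j => m i.succ j.succ := by
  simp [depthOrthant, Fin.forall_fin_succ (n := n)]

lemma preimage_Ici_pairDepths (d : {p : Fin n × Fin n // p.1 < p.2} → ℕ) :
    pairDepths δ ⁻¹' Set.Ici d =
      depthOrthant δ fun i j => if h : i < j then d ⟨(i, j), h⟩ else 0 := by
  ext x
  simp +contextual [depthOrthant, pairDepths, Pi.le_def]

variable [MeasurableSpace X]

lemma measurable_pairDepths (hδ : Measurable (Function.uncurry δ)) :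
    Measurable (pairDepths δ : (Fin n → X) → _) :=
  measurable_pi_lambda _ fun p => hδ.comp (f := fun x : Fin n → X => (x p.1.1, x p.1.2))
    (by fun_prop)

lemma measurableSet_depthOrthant (hδ : Measurable (Function.uncurry δ))
    (m : Fin n → Fin n → ℕ) : MeasurableSet (depthOrthant δ m) := by
  have hpair (i j : Fin n) : Measurable fun x : Fin n → X => δ (x i) (x j) :=
    hδ.comp (f := fun x : Fin n → X => (x i, x j)) (by fun_prop)
  exact measurableSet_setOfPred.2 <| Measurable.forall fun i => Measurable.forall fun j =>
    measurable_const.imp (measurableSet_setOfPred.1 (measurableSet_le measurable_const (hpair i j)))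

namespace IsBalancedTree

variable {μ : Measure X} [IsProbabilityMeasure μ] (hδ : IsBalancedTree μ δ)
include hδ

lemma ae_pi_ae_forall_triple (n : ℕ) : ∀ᵐ x : Fin n → X ∂Measure.pi fun _ => μ, ∀ᵐ z ∂μ,
    ∀ i j, i ≠ j → IsUltrametricTriple (δ (x i) (x j)) (δ (x i) z) (δ (x j) z) := by
  refine ae_pi_ae_cons_of_ae_pi (P := fun x => ∀ i j : Fin n, i ≠ j →
    IsUltrametricTriple (δ (x i.succ) (x j.succ)) (δ (x i.succ) (x 0)) (δ (x j.succ) (x 0))) ?_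
  simp only [ae_all_iff]
  exact fun i j hij => hδ.ae_triple (by simpa using hij) (Fin.succ_ne_zero i) (Fin.succ_ne_zero j)

/-- Once the reduced bounds hold, the largest bound for the new point `z` implies all others. -/
lemma measureReal_cons_mem_depthOrthant {m : Fin (n + 1) → Fin (n + 1) → ℕ} {x : Fin n → X}
    (hult : ∀ᵐ z ∂μ, ∀ i j, i ≠ j →
      IsUltrametricTriple (δ (x i) (x j)) (δ (x i) z) (δ (x j) z))
    (hgeom : ∀ i, HasGeometricTail μ (δ (x i))) (hx : x ∈ depthOrthant δ (reducedBounds m)) :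
    μ.real {z | (Fin.cons z x : Fin (n + 1) → X) ∈ depthOrthant δ m} =
      (1 / 2) ^ Finset.univ.sup fun j : Fin n => m 0 j.succ := by
  have hrest : x ∈ depthOrthant δ fun i j => m i.succ j.succ :=
    fun i j hij => (le_max_left _ _).trans (hx i j hij)
  simp only [cons_mem_depthOrthant_iff, hrest, and_true, hδ.symm _ (x _)]
  cases n with
  | zero => simp
  | succ n =>
    obtain ⟨j, -, hj⟩ := Finset.exists_mem_eq_sup _ Finset.univ_nonempty
      fun j : Fin (n + 1) => m 0 j.succ
    rw [hj, ← hgeom j]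
    refine measureReal_congr (hult.mono fun z hz => propext ⟨fun h => h j, fun h i => ?_⟩)
    have hle : m 0 i.succ ≤ m 0 j.succ :=
      (Finset.le_sup (f := fun j : Fin (n + 1) => m 0 j.succ) (Finset.mem_univ i)).trans_eq hj
    by_cases hij : i = j
    · exact hij ▸ h
    · have hdepth : m 0 i.succ ≤ δ (x i) (x j) := by
        rcases lt_or_gt_of_ne hij with hlt | hlt
        · exact (le_min le_rfl hle).trans ((le_max_right _ _).trans (hx i j hlt))
        · rw [hδ.symm]
          exact (le_min hle le_rfl).trans ((le_max_right _ _).trans (hx j i hlt))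
      exact (le_min hdepth (hle.trans h)).trans (hz i j hij).2.2

omit [IsProbabilityMeasure μ] in
lemma mem_depthOrthant_reducedBounds {m : Fin (n + 1) → Fin (n + 1) → ℕ} {x : Fin n → X} {z : X}
    (hz : ∀ i j, i ≠ j → IsUltrametricTriple (δ (x i) (x j)) (δ (x i) z) (δ (x j) z))
    (h : (Fin.cons z x : Fin (n + 1) → X) ∈ depthOrthant δ m) :
    x ∈ depthOrthant δ (reducedBounds m) := by
  obtain ⟨hfirst, hrest⟩ := cons_mem_depthOrthant_iff.1 h
  simp only [hδ.symm z] at hfirst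
  exact fun i j hij => max_le (hrest i j hij)
    ((min_le_min (hfirst i) (hfirst j)).trans (hz i j hij.ne).2.1)

lemma ae_measureReal_cons_mem_depthOrthant_eq_indicator (m : Fin (n + 1) → Fin (n + 1) → ℕ) :
    ∀ᵐ x : Fin n → X ∂Measure.pi fun _ => μ,
      μ.real {z | (Fin.cons z x : Fin (n + 1) → X) ∈ depthOrthant δ m} =
        (depthOrthant δ (reducedBounds m)).indicator
          (fun _ => (1 / 2) ^ Finset.univ.sup fun j : Fin n => m 0 j.succ) x := by
  filter_upwards [hδ.ae_pi_ae_forall_triple n,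
    ae_all_iff.2 fun i => ae_pi_apply_of_ae hδ.geometric i] with x hult hgeom
  by_cases hx : x ∈ depthOrthant δ (reducedBounds m)
  · rw [Set.indicator_of_mem hx, hδ.measureReal_cons_mem_depthOrthant hult hgeom hx]
  · rw [Set.indicator_of_notMem hx, measureReal_eq_zero_iff]
    exact measure_eq_zero_iff_ae_notMem.2
      (hult.mono fun z hz h => hx (hδ.mem_depthOrthant_reducedBounds hz h))

lemma measureReal_depthOrthant_succ (m : Fin (n + 1) → Fin (n + 1) → ℕ) :
    (Measure.pi fun _ => μ).real (depthOrthant δ m) =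
      (1 / 2) ^ (Finset.univ.sup fun j : Fin n => m 0 j.succ) *
        (Measure.pi fun _ => μ).real (depthOrthant δ (reducedBounds m)) := by
  have hmeas := measurableSet_depthOrthant hδ.measurable m
  have hbdd : BoundedMeasurable ((depthOrthant δ m).indicator fun _ => (1 : ℝ)) :=
    ⟨measurable_const.indicator hmeas, 1, fun x => by
      rw [Set.indicator_apply]; split_ifs <;> simp⟩
  calc (Measure.pi fun _ => μ).real (depthOrthant δ m)
      = ∫ x, ∫ z, (depthOrthant δ m).indicator (fun _ => 1) (Fin.cons z x) ∂μ
          ∂(Measure.pi fun _ => μ) := by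
        rw [← integral_pi_fin_succ hbdd, integral_indicator_const _ hmeas, smul_eq_mul, mul_one]
    _ = ∫ x : Fin n → X, μ.real {z | (Fin.cons z x : Fin (n + 1) → X) ∈ depthOrthant δ m}
          ∂(Measure.pi fun _ => μ) := by
        refine integral_congr_ae (.of_forall fun x => ?_)
        have hslice : MeasurableSet {z | (Fin.cons z x : Fin (n + 1) → X) ∈ depthOrthant δ m} :=
          ((measurePreserving_finCons μ n).measurable.comp measurable_prodMk_right) hmeas
        exact (integral_indicator_const (1 : ℝ) hslice).trans (mul_one _)
    _ = _ := by
        rw [integral_congr_ae (hδ.ae_measureReal_cons_mem_depthOrthant_eq_indicator m),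
          integral_indicator_const _ (measurableSet_depthOrthant hδ.measurable _), smul_eq_mul,
          mul_comm]

lemma measureReal_depthOrthant_eq {Y : Type*} [MeasurableSpace Y] {ν : Measure Y}
    [IsProbabilityMeasure ν] {ε : Y → Y → ℕ} (hε : IsBalancedTree ν ε) (m : Fin n → Fin n → ℕ) :
    (Measure.pi fun _ => μ).real (depthOrthant δ m) =
      (Measure.pi fun _ => ν).real (depthOrthant ε m) := by
  induction n with
  | zero => simp [depthOrthant]
  | succ n ih => rw [hδ.measureReal_depthOrthant_succ, hε.measureReal_depthOrthant_succ, ih]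

lemma map_pairDepths_eq {Y : Type*} [MeasurableSpace Y] {ν : Measure Y}
    [IsProbabilityMeasure ν] {ε : Y → Y → ℕ} (hε : IsBalancedTree ν ε) (n : ℕ) :
    (Measure.pi fun _ : Fin n => μ).map (pairDepths δ) =
      (Measure.pi fun _ : Fin n => ν).map (pairDepths ε) := by
  have hmδ := measurable_pairDepths (n := n) hδ.measurable
  have hmε := measurable_pairDepths (n := n) hε.measurable
  have := Measure.isProbabilityMeasure_map (μ := Measure.pi fun _ : Fin n => μ) hmδ.aemeasurable
  have := Measure.isProbabilityMeasure_map (μ := Measure.pi fun _ : Fin n => ν) hmε.aemeasurable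
  refine ext_of_measureReal_Ici fun d => ?_
  have hd : MeasurableSet (Set.Ici d) := (Set.to_countable _).measurableSet
  rw [map_measureReal_apply hmδ hd, map_measureReal_apply hmε hd, preimage_Ici_pairDepths,
    preimage_Ici_pairDepths]
  exact hδ.measureReal_depthOrthant_eq hε _

end IsBalancedTree

/-- The product over the edges of `G` of the values that an alternating kernel takes at the depths
`d` of the pairs of vertices. -/
def parityProduct (s : ℕ) (G : SimpleGraph (Fin n)) (d : {p : Fin n × Fin n // p.1 < p.2} → ℕ) :
    ℝ :=
  ∏ p ∈ (Finset.univ : Finset {p : Fin n × Fin n // p.1 < p.2}).filter (fun p => G.Adj p.1.1 p.1.2),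
    if Even (d p + s) then 1 else 0

namespace IsAlternating

variable {μ : Measure X} [IsProbabilityMeasure μ] {s : ℕ} {W : X → X → ℝ}

lemma kernelDensity_eq_integral_parityProduct (hW : IsAlternating μ δ s W)
    (hδ : Measurable (Function.uncurry δ)) (G : SimpleGraph (Fin n)) :
    kernelDensity G μ W =
      ∫ d, parityProduct s G d ∂(Measure.pi fun _ : Fin n => μ).map (pairDepths δ) := by
  rw [integral_map (measurable_pairDepths hδ).aemeasurable
    (measurable_of_countable _).aestronglyMeasurable]
  refine integral_congr_ae ?_
  filter_upwards [ae_all_iff.2 fun p : {p : Fin n × Fin n // p.1 < p.2} =>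
    hW.ae_pair p.2.ne] with x hx
  calc ∏ p ∈ Finset.univ.filter (fun p : Fin n × Fin n => p.1 < p.2 ∧ G.Adj p.1 p.2),
        W (x p.1) (x p.2)
      = ∏ p : {p : Fin n × Fin n // p.1 < p.2}, if G.Adj p.1.1 p.1.2 then W (x p.1.1) (x p.1.2)
          else 1 := by
        rw [← Finset.filter_filter, Finset.prod_filter]
        exact Finset.prod_subtype _ (by simp) _
    _ = parityProduct s G (pairDepths δ x) := by
        rw [parityProduct, Finset.prod_filter]
        exact Finset.prod_congr rfl fun p _ => by rw [hx p, pairDepths]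

lemma sameDensities {Y : Type*} [MeasurableSpace Y] {ν : Measure Y} [IsProbabilityMeasure ν]
    {ε : Y → Y → ℕ} {V : Y → Y → ℝ} (hW : IsAlternating μ δ s W) (hδ : IsBalancedTree μ δ)
    (hV : IsAlternating ν ε s V) (hε : IsBalancedTree ν ε) (n : ℕ) : SameDensities n μ W ν V :=
  fun G => by
    rw [hW.kernelDensity_eq_integral_parityProduct hδ.measurable,
      hV.kernelDensity_eq_integral_parityProduct hε.measurable, hδ.map_pairDepths_eq hε]

end IsAlternating

end DepthLaw

/-! ### The infinite lexicographic power of the 4-cycle -/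

/-- `μ` is the product of the uniform probability measures on `{0,1,2,3}`. -/
def IsUniformProduct (μ : Measure (ℕ → Fin 4)) : Prop :=
  ∀ (n : ℕ) (s : Fin n → Fin 4), μ {x | ∀ k : Fin n, x k = s k} = (1 / 4 : ENNReal) ^ n

/-- The binary digits of all coordinates, where the least significant digit of each coordinate comes
first: in the 4-cycle, that digit distinguishes the two sides of the bipartition. -/
def binaryDigits (x : ℕ → Fin 4) (n : ℕ) : Bool :=
  (x (n / 2)).val.testBit (n % 2)

/-- The depth at which `x` and `y` separate in the infinite binary tree. -/
def binaryDepth (x y : ℕ → Fin 4) : ℕ :=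
  PiNat.firstDiff (binaryDigits x) (binaryDigits y)

lemma measurable_firstDiff {α : Type*} [MeasurableSpace α] [MeasurableEq α] :
    Measurable fun p : (ℕ → α) × (ℕ → α) => PiNat.firstDiff p.1 p.2 := by
  have hcoord (i : ℕ) : Measurable fun p : (ℕ → α) × (ℕ → α) => p.1 i = p.2 i :=
    Measurable.eq (by fun_prop) (by fun_prop)
  refine measurable_of_Ici fun d => ?_
  cases d with
  | zero => simp
  | succ d =>
    have heq : (fun p : (ℕ → α) × (ℕ → α) => PiNat.firstDiff p.1 p.2) ⁻¹' Set.Ici (d + 1) =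
        {p | ¬ (∀ i, p.1 i = p.2 i) ∧ ∀ i, i < d + 1 → p.1 i = p.2 i} := by
      ext p
      change d + 1 ≤ PiNat.firstDiff p.1 p.2 ↔ _
      by_cases h : p.1 = p.2
      · simp [h, PiNat.firstDiff_def]
      · rw [← PiNat.mem_cylinder_iff_le_firstDiff h]
        simp [← funext_iff, h]
    rw [heq]
    exact measurableSet_setOfPred.2 ((Measurable.forall hcoord).not.and
      (Measurable.forall fun i => measurable_const.imp (hcoord i)))

section BinaryDigits

variable {x y z : ℕ → Fin 4}

lemma mem_cylinder_binaryDigits_two_mul {k : ℕ} :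
    binaryDigits y ∈ PiNat.cylinder (binaryDigits x) (2 * k) ↔ y ∈ PiNat.cylinder x k := by
  have hdigits : ∀ a b : Fin 4, a.val.testBit 0 = b.val.testBit 0 →
      a.val.testBit 1 = b.val.testBit 1 → a = b := by decide
  simp only [PiNat.mem_cylinder_iff]
  refine ⟨fun h i hi => hdigits _ _ ?_ ?_, fun h i hi => ?_⟩
  · simpa [binaryDigits] using h (2 * i) (by omega)
  · simpa [binaryDigits, Nat.mul_add_div, Nat.mul_add_mod] using h (2 * i + 1) (by omega)
  · rw [binaryDigits, binaryDigits, h (i / 2) (by omega)]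

lemma mem_cylinder_binaryDigits_two_mul_add_one {k : ℕ} :
    binaryDigits y ∈ PiNat.cylinder (binaryDigits x) (2 * k + 1) ↔
      y ∈ PiNat.cylinder x k ∧ (y k).val.testBit 0 = (x k).val.testBit 0 := by
  rw [← mem_cylinder_binaryDigits_two_mul, PiNat.mem_cylinder_iff, Nat.forall_lt_succ_right,
    PiNat.mem_cylinder_iff]
  simp only [binaryDigits, Nat.mul_div_cancel_left k two_pos, Nat.mul_mod_right]

lemma binaryDigits_injective : Function.Injective binaryDigits := fun _ _ h => funext fun k =>
  (mem_cylinder_binaryDigits_two_mul (k := k + 1)).1 (h ▸ PiNat.self_mem_cylinder _ _) k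
    k.lt_succ_self

lemma le_binaryDepth_iff (hxy : x ≠ y) {d : ℕ} :
    d ≤ binaryDepth x y ↔ binaryDigits y ∈ PiNat.cylinder (binaryDigits x) d := by
  rw [PiNat.mem_cylinder_comm, PiNat.mem_cylinder_iff_le_firstDiff (binaryDigits_injective.ne hxy),
    binaryDepth]

lemma binaryDepth_comm (x y : ℕ → Fin 4) : binaryDepth x y = binaryDepth y x :=
  PiNat.firstDiff_comm _ _

lemma isUltrametricTriple_binaryDepth (hxy : x ≠ y) (hxz : x ≠ z) (hyz : y ≠ z) :
    IsUltrametricTriple (binaryDepth x y) (binaryDepth x z) (binaryDepth y z) := by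
  have hmin {a b c : ℕ → Fin 4} (hac : a ≠ c) :
      min (binaryDepth a b) (binaryDepth b c) ≤ binaryDepth a c :=
    PiNat.min_firstDiff_le _ _ _ (binaryDigits_injective.ne hac)
  refine ⟨?_, ?_, hmin hxz⟩
  · rw [binaryDepth_comm x y]
    exact hmin hyz
  · rw [binaryDepth_comm y z]
    exact hmin hxy

lemma measurable_binaryDigits : Measurable binaryDigits :=
  measurable_pi_lambda _ fun n => (measurable_of_countable fun a : Fin 4 =>
    a.val.testBit (n % 2)).comp (measurable_pi_apply (n / 2))

lemma measurable_binaryDepth : Measurable (Function.uncurry binaryDepth) :=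
  measurable_firstDiff.comp (measurable_binaryDigits.prodMap measurable_binaryDigits)

end BinaryDigits

lemma UB_eq_of_ne {x y : ℕ → Fin 4} (hxy : x ≠ y) :
    UB x y = if Even (binaryDepth x y) then 1 else 0 := by
  set k := PiNat.firstDiff x y with hk
  have hcycle : ∀ a b : Fin 4, a ≠ b →
      ((a - b = 1 ∨ a - b = 3) ↔ b.val.testBit 0 ≠ a.val.testBit 0) := by decide
  have hUB : UB x y = if x k - y k = 1 ∨ x k - y k = 3 then 1 else 0 := by
    simp only [UB, hk, PiNat.firstDiff_def, dif_neg hxy, dif_pos hxy]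
    congr!
  have hmem : y ∈ PiNat.cylinder x k := fun i hi => (PiNat.apply_eq_of_lt_firstDiff hi).symm
  have hne : x k ≠ y k := PiNat.apply_firstDiff_ne hxy
  have hge : 2 * k ≤ binaryDepth x y :=
    (le_binaryDepth_iff hxy).2 (mem_cylinder_binaryDigits_two_mul.2 hmem)
  have hlt : ¬ 2 * (k + 1) ≤ binaryDepth x y := fun h => hne
    (mem_cylinder_binaryDigits_two_mul.1 ((le_binaryDepth_iff hxy).1 h) k k.lt_succ_self).symm
  have hodd : 2 * k + 1 ≤ binaryDepth x y ↔ (y k).val.testBit 0 = (x k).val.testBit 0 := by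
    rw [le_binaryDepth_iff hxy, mem_cylinder_binaryDigits_two_mul_add_one, and_iff_right hmem]
  have heven : Even (binaryDepth x y) ↔ ¬ 2 * k + 1 ≤ binaryDepth x y := by
    rw [Nat.even_iff]
    omega
  simp only [hUB, hcycle _ _ hne, heven, hodd, ne_eq]

lemma isGraphon_UB : IsGraphon UB := by
  have hUB (x y : ℕ → Fin 4) :
      UB x y = if x = y then 0 else if Even (binaryDepth x y) then 1 else 0 := by
    by_cases hxy : x = y
    · rw [if_pos hxy, UB, dif_pos hxy]
    · rw [if_neg hxy, UB_eq_of_ne hxy]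
  refine ⟨?_, fun x y => ?_, fun x y => ?_, fun x y => ?_⟩
  · have huncurry : Function.uncurry UB = fun p : (ℕ → Fin 4) × (ℕ → Fin 4) =>
        if p.1 = p.2 then 0 else if Even (binaryDepth p.1 p.2) then 1 else 0 :=
      funext fun p => hUB p.1 p.2
    rw [huncurry]
    exact Measurable.ite (measurableSet_eq_fun measurable_fst measurable_snd) measurable_const
      ((measurable_of_countable fun d : ℕ => if Even d then (1 : ℝ) else 0).comp
        measurable_binaryDepth)
  · rw [hUB, hUB, binaryDepth_comm]
    simp only [eq_comm]
  all_goals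
    rw [hUB]
    split_ifs <;> norm_num

namespace IsUniformProduct

variable {μ : Measure (ℕ → Fin 4)} (hμ : IsUniformProduct μ)
include hμ

lemma measureReal_cylinder (x : ℕ → Fin 4) (n : ℕ) :
    μ.real (PiNat.cylinder x n) = (1 / 4) ^ n := by
  have heq : PiNat.cylinder x n = {y | ∀ k : Fin n, y k = x k} := by
    ext y
    simp [Fin.forall_iff]
  simp [heq, measureReal_def, hμ n fun k => x k]

lemma measureReal_cylinder_inter [IsFiniteMeasure μ] (x : ℕ → Fin 4) (n : ℕ) (S : Finset (Fin 4)) :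
    μ.real {y | y ∈ PiNat.cylinder x n ∧ y n ∈ S} = S.card * (1 / 4) ^ (n + 1) := by
  have hmem {a : Fin 4} {y : ℕ → Fin 4} :
      y ∈ PiNat.cylinder (Function.update x n a) (n + 1) ↔ y ∈ PiNat.cylinder x n ∧ y n = a := by
    rw [PiNat.mem_cylinder_iff, Nat.forall_lt_succ_right, Function.update_self]
    refine and_congr_left' (forall₂_congr fun i hi => ?_)
    rw [Function.update_of_ne hi.ne]
  have hunion : {y | y ∈ PiNat.cylinder x n ∧ y n ∈ S} =
      ⋃ a ∈ S, PiNat.cylinder (Function.update x n a) (n + 1) := by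
    ext y
    simp [hmem]
  rw [hunion, measureReal_biUnion_finset]
  · simp only [hμ.measureReal_cylinder, Finset.sum_const, nsmul_eq_mul]
  · exact fun a _ b _ hab => Set.disjoint_left.2 fun y hya hyb =>
      hab ((hmem.1 hya).2.symm.trans (hmem.1 hyb).2)
  · exact fun a _ => (PiNat.isOpen_cylinder _ _ _).measurableSet

lemma measureReal_mem_cylinder_binaryDigits [IsFiniteMeasure μ] (x : ℕ → Fin 4) (d : ℕ) :
    μ.real {y | binaryDigits y ∈ PiNat.cylinder (binaryDigits x) d} = (1 / 2) ^ d := by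
  obtain ⟨k, rfl | rfl⟩ := d.even_or_odd'
  · simp only [mem_cylinder_binaryDigits_two_mul, Set.ofPred_mem_eq, hμ.measureReal_cylinder,
      pow_mul]
    norm_num
  · have hcard : ∀ a : Fin 4, (Finset.univ.filter fun b : Fin 4 =>
        b.val.testBit 0 = a.val.testBit 0).card = 2 := by decide
    have := hμ.measureReal_cylinder_inter x k
      (Finset.univ.filter fun b => b.val.testBit 0 = (x k).val.testBit 0)
    simp only [mem_cylinder_binaryDigits_two_mul_add_one]
    simp only [Finset.mem_filter_univ, hcard] at this
    rw [this, pow_succ, pow_succ, pow_mul]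
    norm_num
    ring

lemma ae_ne [IsFiniteMeasure μ] (x : ℕ → Fin 4) : ∀ᵐ y ∂μ, x ≠ y := by
  have hnull : μ.real {y | x = y} = 0 := by
    refine le_antisymm (ge_of_tendsto' (tendsto_pow_atTop_nhds_zero_of_lt_one (r := (1 / 4 : ℝ))
      (by norm_num) (by norm_num)) fun n => ?_) measureReal_nonneg
    rw [← hμ.measureReal_cylinder x n]
    exact measureReal_mono fun y (hxy : x = y) => hxy ▸ PiNat.self_mem_cylinder x n
  exact measure_eq_zero_iff_ae_notMem.1 ((measureReal_eq_zero_iff).1 hnull)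

variable [IsProbabilityMeasure μ]

lemma ae_pi_ne {ι : Type*} [Fintype ι] {i j : ι} (hij : i ≠ j) :
    ∀ᵐ x : ι → ℕ → Fin 4 ∂Measure.pi fun _ => μ, x i ≠ x j :=
  ae_pi_pair_of_ae_ae (P := fun x y => x ≠ y)
    (measurableSet_eq_fun measurable_fst measurable_snd).compl (.of_forall hμ.ae_ne) hij

lemma isAlternating_UB : IsAlternating μ binaryDepth 0 UB :=
  (hμ.ae_pi_ne (Fin.zero_ne_one (n := 0))).mono fun _ hx => UB_eq_of_ne hx

lemma isBalancedTree_binaryDepth : IsBalancedTree μ binaryDepth where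
  measurable := measurable_binaryDepth
  symm := binaryDepth_comm
  geometric := by
    refine .of_forall fun x d => ?_
    rw [← hμ.measureReal_mem_cylinder_binaryDigits x d]
    exact measureReal_congr ((hμ.ae_ne x).mono fun y hxy => propext (le_binaryDepth_iff hxy))
  ultrametric := by
    filter_upwards [hμ.ae_pi_ne (ι := Fin 3) (i := 0) (j := 1) (by decide),
      hμ.ae_pi_ne (ι := Fin 3) (i := 0) (j := 2) (by decide),
      hμ.ae_pi_ne (ι := Fin 3) (i := 1) (j := 2) (by decide)] with x h01 h02 h12
    exact isUltrametricTriple_binaryDepth h01 h02 h12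

end IsUniformProduct

/-! ### Finite forcibility -/

/-- The kernel `W` on the unit square, extended by zero: this makes it a graphon on all of `ℝ`. -/
def unitSquareKernel (W : ℝ → ℝ → ℝ) (x y : ℝ) : ℝ :=
  if x ∈ I01 ∧ y ∈ I01 then W x y else 0

lemma measurableSet_I01 : MeasurableSet I01 :=
  measurableSet_Icc

lemma memW0.isGraphon_unitSquareKernel {W : ℝ → ℝ → ℝ} (hW : memW0 W) :
    IsGraphon (unitSquareKernel W) := by
  obtain ⟨hmeas, hsymm, hrange⟩ := hW
  refine ⟨hmeas.ite (measurableSet_I01.prod measurableSet_I01) measurable_const,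
    fun x y => ?_, fun x y => ?_, fun x y => ?_⟩ <;> unfold unitSquareKernel
  · by_cases h : x ∈ I01 ∧ y ∈ I01
    · rw [if_pos h, if_pos h.symm, hsymm x h.1 y h.2]
    · rw [if_neg h, if_neg (h ∘ And.symm)]
  · split_ifs with h
    exacts [(hrange x h.1 y h.2).1, le_rfl]
  · split_ifs with h
    exacts [(hrange x h.1 y h.2).2, zero_le_one]

instance isProbabilityMeasure_restrict_I01 : IsProbabilityMeasure (volume.restrict I01) :=
  ⟨by simp [I01]⟩

lemma homDensity_eq_kernelDensity {n : ℕ} (G : SimpleGraph (Fin n)) (W : ℝ → ℝ → ℝ) :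
    homDensity G W = kernelDensity G (volume.restrict I01) (unitSquareKernel W) := by
  unfold homDensity kernelDensity
  rw [← Measure.restrict_pi_pi, ← volume_pi]
  refine setIntegral_congr_fun (MeasurableSet.univ_pi fun _ => measurableSet_I01) fun x hx =>
    Finset.prod_congr rfl fun p _ => ?_
  rw [unitSquareKernel, if_pos ⟨hx p.1 trivial, hx p.2 trivial⟩]

theorem IsAlternating.sameDensities_of_le_six {X Y : Type*} [MeasurableSpace X]
    [MeasurableSpace Y] {μ : Measure X} {ν : Measure Y} [IsProbabilityMeasure μ]
    [IsProbabilityMeasure ν] {W : X → X → ℝ} {V : Y → Y → ℝ} {ε : Y → Y → ℕ}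
    (hV : IsAlternating ν ε 0 V) (hε : IsBalancedTree ν ε) (hV' : IsGraphon V) (hW : IsGraphon W)
    (h : ∀ n ≤ 6, SameDensities n μ W ν V) (n : ℕ) : SameDensities n μ W ν V :=
  have hT : IsTreelike μ W := SameDensities.isTreelike h hW hV' (hV.isTreelike hε)
  (hT.isAlternating hW).sameDensities (hT.isBalancedTree hW) hV hε n

universe u

theorem statement15_general (μ : Measure (ℕ → Fin 4)) [IsProbabilityMeasure μ]
    (hcyl : ∀ (n : ℕ) (s : Fin n → Fin 4),
      μ {x : ℕ → Fin 4 | ∀ k : Fin n, x k = s k} = (1/4 : ENNReal) ^ (n : ℕ)) :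
    ∃ (m : ℕ) (nn : Fin m → ℕ) (F : ∀ i, SimpleGraph (Fin (nn i))),
      ∀ (X : Type u) [MeasurableSpace X] (ν : Measure X) [IsProbabilityMeasure ν]
        (W : X → X → ℝ), IsGraphon W → (∀ i, kernelDensity (F i) ν W = tUB (F i) μ) →
        ∀ (n : ℕ) (G : SimpleGraph (Fin n)), kernelDensity G ν W = tUB G μ := by
  have hμ : IsUniformProduct μ := hcyl
  let e := (Fintype.equivFin (Σ n : Fin 7, SimpleGraph (Fin n))).symm
  refine ⟨_, fun i => (e i).1, fun i => (e i).2, fun X _ ν _ W hW hF =>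
    hμ.isAlternating_UB.sameDensities_of_le_six hμ.isBalancedTree_binaryDepth isGraphon_UB hW ?_⟩
  have hforced : ∀ p : Σ n : Fin 7, SimpleGraph (Fin n), kernelDensity p.2 ν W = tUB p.2 μ :=
    e.forall_congr_right.1 hF
  exact fun n hn G => hforced ⟨⟨n, Nat.lt_succ_of_le hn⟩, G⟩

/-- with `μ` the product of the uniform probability measures on
`{0,1,2,3}` (characterized by its values `4^{-n}` on cylinder sets), the graphon
`U_B` is finitely forcible: finitely many density constraints `t(Fᵢ,W) = t(Fᵢ,U_B)`
force `t(F,W) = t(F,U_B)` for all finite simple graphs `F`. -/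
theorem statement15 (μ : Measure (ℕ → Fin 4)) [IsProbabilityMeasure μ]
    (hcyl : ∀ (n : ℕ) (s : Fin n → Fin 4),
      μ {x : ℕ → Fin 4 | ∀ k : Fin n, x k = s k} = (1/4 : ENNReal) ^ (n : ℕ)) :
    ∃ (m : ℕ) (nn : Fin m → ℕ) (F : ∀ i, SimpleGraph (Fin (nn i))),
      ∀ W : ℝ → ℝ → ℝ, memW0 W →
        (∀ i, homDensity (F i) W = tUB (F i) μ) →
        ∀ (n : ℕ) (G : SimpleGraph (Fin n)), homDensity G W = tUB G μ := by
  obtain ⟨m, nn, F, hF⟩ := statement15_general μ hcyl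
  refine ⟨m, nn, F, fun W hW h n G => ?_⟩
  simp only [homDensity_eq_kernelDensity] at h ⊢
  exact hF ℝ _ _ hW.isGraphon_unitSquareKernel h n G
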